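/- Let n = a + m + b with m ≥ 2 and a, b ≥ 0. For K ⊨ n set N_K = Θ_K^+(b+1) − Θ_K^+(b+m). For any composition J with |J| ≥ b+1, let J = J_1 J_2 be the bisection with |J_1| = σ_J^+(b+1). Let S_{a,m,b} be the set of pairs (I, J) of compositions such that either (i) K := J_1 Ī J_2 ⊨ n, the first part i_1 of I is not 1, |J_1| ≤ b+m−1, 2 ≤ |I| ≤ m−2, and |J_2| ≤ σ_{K̄}^−(a) − 1; or (ii) K := J_1 Ī J_2 ⊨ n, i_1 ≠ 1, |J_1| ≥ b+m, and 2 ≤ |I| ≤ m−2; or (iii) IJ ⊨ n, i_1 = 1, |I| ≤ m−2, and |J_2| ≤ a−1. Then X_{H_{a,m,b}} = Σ_{K ⊨ n, N_K ≤ −1} (−N_K) · w_K · e_K / (Θ_K^+(b+m) + Θ_K^−(b+m−1)) + Σ_{K ⊨ n, N_K ≥ 1} N_K · w_K · e_K + Σ_{(I,J) ∈ S_{a,m,b}} (m − 1 − |I|) · w_I · w_J · e_{IJ}. (When N_K ≤ −1 the denominator Θ_K^+(b+m) + Θ_K^−(b+m−1) is a positive integer.) -/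

import Mathlib

/-!
The colours are first restricted to a finite set, which is harmless for any single coefficient
(`csf_coeff`, `esymmProd_cong`). For a finite set of colours `c` with variables `x_c`, write
`⟨f⟩ = Σ_c x_c f(c)` and let `T` be the transfer operator `(T f)(c) = Σ_{c' ≠ c} x_{c'} f(c')`, so
that the proper colourings of a path are counted by powers of `T`. Deleting the chord of the hat
gives, with `j = m - 1`,
`X_H = ⟨T^{n-1} 1⟩ - Σ_c x_c (T^a 1)(c) (T^b 1)(c) (T^j δ_c)(c)`.

Let `P_n = Σ_{I ⊨ n} w_I e_I` and let `U_n` be the same sum weighted by `∏ (i_k - 1)` over all the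
parts. With `E = Σ e_k z^k`, their generating series satisfy `P = E U` and `P - 1 = z E' U`.
Newton's identities turn the latter into `P_{k+1} = ⟨h_k⟩` with
`h_k(c) = Σ_i (-x_c)^i P_{k-i}`, whence `T^k 1 = h_k`; thus `P` is the series of the paths. Also
`(T^j δ_c)(c) = (-x_c)^j - Σ_{p<j} (j - p) (-x_c)^{j-p} P_p`. Consequently `X_H` is an explicit
expression in the `P_k` and `G_i = ⟨(-x)^i h_b⟩` (`sum_hat`), where the `G_i` are determined by
`P_{b+1+X} = Σ_p P_p G_{X-p}` (`Pc_GF`).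

On the other side, cut each composition at the parts containing the positions `b + 1` and `b + m`.
With `A_τ` the sum of `w_J e_J` over the compositions `J` of `b + 1 + τ` whose last part contains
the position `b + 1`, every sum in the formula becomes a polynomial in the `e_k`, `U_k` and `A_τ`.
The denominator in the first sum is `k - 1`, where `k` is the part at the position `b + m`, and it
cancels a factor of `w_K`. The three clauses defining `S_{a,m,b}` together say that
`1 ≤ |I| ≤ m - 2` and `|J_2| + i_1 ≤ a` (`Smem_iff`). The third sum then supplies exactly the terms
missing from the second one for the inner sums to be the `P_p` (`rhs_eq`).

Since `A U` and `P G = E U G` are both the series of the `P_{b+1+X}`, we have `A = E G`. Together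
with the Leibniz rule for `z d/dz`, this makes the two sides equal (`main_algebra`).
-/

open Finset

/-- Symmetric functions in countably many variables `x_0, x_1, x_2, …`, realized inside
the ring of formal multivariate power series over `ℚ`. -/
abbrev SymF : Type := MvPowerSeries ℕ ℚ

open Classical in
/-- The elementary symmetric function `e_k`: the sum of all squarefree monomials of
degree `k` (so `e_0 = 1`). -/
noncomputable def esymm (k : ℕ) : SymF :=
  fun d : ℕ →₀ ℕ =>
    if (d.sum fun _ e => e) = k ∧ ∀ i, d i ≤ 1 then (1 : ℚ) else 0

/-- `e_I = e_{i_1} ⋯ e_{i_s}` for a list `I = [i_1, …, i_s]`. -/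
noncomputable def esymmProd (I : List ℕ) : SymF := (I.map esymm).prod

open Classical in
/-- The chromatic symmetric function `X_G = Σ_κ ∏_v x_{κ v}`, summed over proper colorings
`κ : V → ℕ`: the coefficient of the monomial with exponent vector `d` is the number of
proper colorings all of whose color fibres have the sizes recorded by `d`. -/
noncomputable def csf {V : Type} [Finite V] (G : SimpleGraph V) : SymF :=
  fun d : ℕ →₀ ℕ =>
    (({κ : V → ℕ | (∀ v w, G.Adj v w → κ v ≠ κ w) ∧
        ∀ i : ℕ, {v | κ v = i}.ncard = d i}).ncard : ℚ)

/-- `w_I = i_1 ∏_{j ≥ 2} (i_j - 1)`, with `w_ε = 1`. -/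
def wC : List ℕ → ℕ
  | [] => 1
  | h :: t => h * (t.map (· - 1)).prod

/-- `σ_I^+(a)`: the smallest prefix sum of `I` that is at least `a`. -/
noncomputable def sigmaPlus (I : List ℕ) (a : ℕ) : ℕ :=
  sInf {m | (∃ k ≤ I.length, (I.take k).sum = m) ∧ a ≤ m}

/-- `Θ_I^+(a) = σ_I^+(a) - a`. -/
noncomputable def thetaPlus (I : List ℕ) (a : ℕ) : ℕ := sigmaPlus I a - a

/-- `σ_I^-(a)`: the largest prefix sum of `I` that is at most `a`. -/
noncomputable def sigmaMinus (I : List ℕ) (a : ℕ) : ℕ :=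
  sSup {m | (∃ k ≤ I.length, (I.take k).sum = m) ∧ m ≤ a}

/-- `Θ_I^-(a) = a - σ_I^-(a)`. -/
noncomputable def thetaMinus (I : List ℕ) (a : ℕ) : ℕ := a - sigmaMinus I a

/-- The hat `H_{a,m,b}`: the path on vertices `0, 1, …, a+m+b-1` together with the extra
edge joining vertex `a` to vertex `a+m-1` (in 1-indexed terms, the edge `v_{a+1} v_{a+m}`). -/
def hatG (a m b : ℕ) : SimpleGraph (Fin (a + m + b)) :=
  SimpleGraph.fromRel (fun i j =>
    (i : ℕ) + 1 = (j : ℕ) ∨ ((i : ℕ) = a ∧ (j : ℕ) = a + m - 1))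


/-- `N_K = Θ_K^+(b+1) - Θ_K^+(b+m)`, as an integer. -/
noncomputable def NK (b m : ℕ) (K : List ℕ) : ℤ :=
  (thetaPlus K (b + 1) : ℤ) - (thetaPlus K (b + m) : ℤ)

/-- The cut point of the bisection `J = J₁ J₂` with `|J₁| = σ_J^+(a)`:
the least number of parts whose sum is at least `a`. -/
noncomputable def bisIdx (J : List ℕ) (a : ℕ) : ℕ := sInf {k | a ≤ (J.take k).sum}

/-- The first half `J₁` of the bisection of `J` (with `|J₁| = σ_J^+(a)`). -/
noncomputable def bis1 (J : List ℕ) (a : ℕ) : List ℕ := J.take (bisIdx J a)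

/-- The second half `J₂` of the bisection of `J`. -/
noncomputable def bis2 (J : List ℕ) (a : ℕ) : List ℕ := J.drop (bisIdx J a)

/-- Membership in the index set `S_{a,m,b}` for pairs of compositions `(I, J)`,
where `J = J₁ J₂` is the bisection of `J` with `|J₁| = σ_J^+(b+1)` and
`K = J₁ Ī J₂`:
(i) `i_1 ≠ 1`, `|J₁| ≤ b+m-1`, `2 ≤ |I| ≤ m-2` and `|J₂| ≤ σ_{K̄}^-(a) - 1`; or
(ii) `i_1 ≠ 1`, `|J₁| ≥ b+m` and `2 ≤ |I| ≤ m-2`; or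
(iii) `i_1 = 1`, `|I| ≤ m-2` and `|J₂| ≤ a-1`. -/
noncomputable def Smem (a m b : ℕ) (I J : List ℕ) : Prop :=
  (I.headI ≠ 1 ∧ (bis1 J (b + 1)).sum ≤ b + m - 1 ∧ 2 ≤ I.sum ∧ I.sum ≤ m - 2 ∧
      (bis2 J (b + 1)).sum <
        sigmaMinus (bis1 J (b + 1) ++ I.reverse ++ bis2 J (b + 1)).reverse a) ∨
  (I.headI ≠ 1 ∧ b + m ≤ (bis1 J (b + 1)).sum ∧ 2 ≤ I.sum ∧ I.sum ≤ m - 2) ∨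
  (I.headI = 1 ∧ I.sum ≤ m - 2 ∧ (bis2 J (b + 1)).sum < a)

/-! ### Sums over compositions -/

/-- The finite set of all compositions of `n`, as lists of positive integers. -/
def comps (n : ℕ) : Finset (List ℕ) :=
  (univ : Finset (Composition n)).image Composition.blocks

theorem mem_comps {n : ℕ} {l : List ℕ} :
    l ∈ comps n ↔ (∀ i ∈ l, 0 < i) ∧ l.sum = n := by
  simp only [comps, mem_image, mem_univ, true_and]
  constructor
  · rintro ⟨K, rfl⟩
    exact ⟨fun i hi => K.blocks_pos hi, K.blocks_sum⟩
  · rintro ⟨h1, h2⟩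
    exact ⟨⟨l, fun {i} hi => h1 i hi, h2⟩, rfl⟩

theorem sum_composition {M : Type*} [AddCommMonoid M] (n : ℕ) (f : List ℕ → M) :
    ∑ K : Composition n, f K.blocks = ∑ K ∈ comps n, f K := by
  rw [comps, sum_image]
  intro K _ L _ h
  exact Composition.ext h

theorem comps_zero : comps 0 = {[]} := by
  ext l
  rw [mem_comps, mem_singleton]
  constructor
  · rintro ⟨h1, h2⟩
    cases l with
    | nil => rfl
    | cons a t =>
      have := h1 a (by simp)
      simp at h2
      omega
  · rintro rfl
    simp

/-- In a composition of size larger than `v` some part `k` contains the position `v + 1`. -/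
theorem exists_cross (v : ℕ) (K : List ℕ) (hpos : ∀ i ∈ K, 0 < i) (h : v < K.sum) :
    ∃ J k L, K = J ++ k :: L ∧ J.sum ≤ v ∧ v < J.sum + k := by
  induction K generalizing v with
  | nil => simp at h
  | cons a t ih =>
    by_cases hv : v < a
    · exact ⟨[], a, t, by simp, by simp, by simpa using hv⟩
    · simp only [List.sum_cons] at h
      obtain ⟨J, k, L, rfl, h1, h2⟩ := ih (v - a) (fun i hi => hpos i (by simp [hi])) (by omega)
      refine ⟨a :: J, k, L, by simp, ?_, ?_⟩ <;> simp only [List.sum_cons] <;> omega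

theorem cross_unique {v k k' : ℕ} {J J' L L' : List ℕ} (h : J ++ k :: L = J' ++ k' :: L')
    (h1 : J.sum ≤ v) (h2 : v < J.sum + k) (h1' : J'.sum ≤ v) (h2' : v < J'.sum + k') :
    J = J' ∧ k = k' ∧ L = L' := by
  rcases List.append_eq_append_iff.1 h with ⟨as, rfl, h3⟩ | ⟨as, rfl, h3⟩
  all_goals
    cases as with
    | nil => simp_all
    | cons c cs =>
      simp only [List.cons_append, List.cons.injEq, List.sum_append, List.sum_cons] at *
      omega

/-- Cutting a composition of `v + 1 + t` at the part `v + 1 + τ - |J|` that contains the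
position `v + 1`: `J` is what precedes this part and `L` what follows it. -/
theorem sum_cross {M : Type*} [AddCommMonoid M] (v t : ℕ) (f : List ℕ → M) :
    ∑ K ∈ comps (v + 1 + t), f K =
      ∑ u ∈ range (v + 1), ∑ τ ∈ range (t + 1), ∑ J ∈ comps u, ∑ L ∈ comps (t - τ),
        f (J ++ (v + 1 + τ - u) :: L) := by
  simp_rw [sum_sigma']
  symm
  refine sum_nbij (fun x => x.2.2.1 ++ (v + 1 + x.2.1 - x.1) :: x.2.2.2) ?_ ?_ ?_ ?_
  · rintro ⟨u, τ, J, L⟩ h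
    simp only [mem_sigma, mem_range, mem_comps] at h ⊢
    obtain ⟨h1, h2, ⟨h3, h4⟩, h5, h6⟩ := h
    refine ⟨?_, ?_⟩
    · intro i hi
      simp only [List.mem_append, List.mem_cons] at hi
      rcases hi with hi | rfl | hi
      · exact h3 i hi
      · omega
      · exact h5 i hi
    · simp only [List.sum_append, List.sum_cons]
      omega
  · rintro ⟨u, τ, J, L⟩ h ⟨u', τ', J', L'⟩ h' heq
    simp only [coe_sigma, Set.mem_sigma_iff, mem_coe, mem_range, mem_comps] at h h' heq
    obtain ⟨e1, e2, e3⟩ := cross_unique (v := v) heq (by omega) (by omega) (by omega) (by omega)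
    subst e1 e3
    have : u = u' := by omega
    subst this
    have : τ = τ' := by omega
    subst this
    rfl
  · intro K hK
    simp only [mem_coe, mem_comps] at hK
    obtain ⟨J, k, L, rfl, h1, h2⟩ := exists_cross v K hK.1 (by omega)
    have h3 := hK.2
    simp only [List.sum_append, List.sum_cons] at h3
    refine ⟨⟨J.sum, J.sum + k - v - 1, J, L⟩, ?_, ?_⟩
    · simp only [coe_sigma, Set.mem_sigma_iff, mem_coe, mem_range, mem_comps]
      refine ⟨by omega, by omega, ⟨fun i hi => hK.1 i (by simp [hi]), trivial⟩,
        fun i hi => hK.1 i (by simp [hi]), by omega⟩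
    · simp only
      congr 2
      omega
  · intros; rfl

theorem sum_comps_succ {M : Type*} [AddCommMonoid M] (n : ℕ) (f : List ℕ → M) :
    ∑ K ∈ comps (n + 1), f K = ∑ k ∈ range (n + 1), ∑ L ∈ comps (n - k), f ((k + 1) :: L) := by
  have := sum_cross 0 n f
  rw [add_comm n 1, ← Nat.zero_add 1, this]
  simp [comps_zero, add_comm]

/-! ### The statistics `σ^±` and the index set `S_{a,m,b}` -/

/-- No initial sum falls strictly inside the part `k`. -/
theorem take_sum_cases (J : List ℕ) (k : ℕ) (L : List ℕ) (i : ℕ) :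
    ((J ++ k :: L).take i).sum ≤ J.sum ∨ J.sum + k ≤ ((J ++ k :: L).take i).sum := by
  rcases le_or_gt i J.length with h | h
  · left
    rw [List.take_append_of_le_length h]
    exact (List.take_sublist i J).sum_le_sum (fun _ _ => Nat.zero_le _)
  · right
    obtain ⟨d, rfl⟩ : ∃ d, i = J.length + (d + 1) := ⟨i - J.length - 1, by omega⟩
    rw [List.take_length_add_append]
    simp only [List.take_succ_cons, List.sum_append, List.sum_cons]
    omega

theorem take_length_sum (J : List ℕ) (k : ℕ) (L : List ℕ) :
    ((J ++ k :: L).take J.length).sum = J.sum := by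
  simp

theorem take_length_succ_sum (J : List ℕ) (k : ℕ) (L : List ℕ) :
    ((J ++ k :: L).take (J.length + 1)).sum = J.sum + k := by
  rw [List.take_length_add_append]
  simp

theorem sigmaPlus_cross (J : List ℕ) (k : ℕ) (L : List ℕ) (a : ℕ)
    (h1 : J.sum < a) (h2 : a ≤ J.sum + k) : sigmaPlus (J ++ k :: L) a = J.sum + k := by
  apply le_antisymm
  · apply Nat.sInf_le
    exact ⟨⟨J.length + 1, by simp, take_length_succ_sum J k L⟩, h2⟩
  · apply le_csInf
    · exact ⟨J.sum + k, ⟨J.length + 1, by simp, take_length_succ_sum J k L⟩, h2⟩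
    · rintro x ⟨⟨i, _, rfl⟩, hx⟩
      rcases take_sum_cases J k L i with h | h <;> omega

theorem sigmaMinus_cross (J : List ℕ) (k : ℕ) (L : List ℕ) (a : ℕ)
    (h1 : J.sum ≤ a) (h2 : a < J.sum + k) : sigmaMinus (J ++ k :: L) a = J.sum := by
  apply le_antisymm
  · apply csSup_le
    · exact ⟨J.sum, ⟨J.length, by simp, take_length_sum J k L⟩, h1⟩
    · rintro x ⟨⟨i, _, rfl⟩, hx⟩
      rcases take_sum_cases J k L i with h | h <;> omega
  · apply le_csSup
    · exact ⟨a, fun x hx => hx.2⟩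
    · exact ⟨⟨J.length, by simp, take_length_sum J k L⟩, h1⟩

theorem bisIdx_cross (J : List ℕ) (k : ℕ) (L : List ℕ) (a : ℕ)
    (h1 : J.sum < a) (h2 : a ≤ J.sum + k) : bisIdx (J ++ k :: L) a = J.length + 1 := by
  apply le_antisymm
  · apply Nat.sInf_le
    show a ≤ _
    rw [take_length_succ_sum]
    exact h2
  · apply le_csInf
    · exact ⟨J.length + 1, by show a ≤ _; rw [take_length_succ_sum]; exact h2⟩
    · intro i (hi : a ≤ _)
      by_contra! hlt
      have : ((J ++ k :: L).take i).sum ≤ J.sum := by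
        rw [List.take_append_of_le_length (by omega)]
        exact (List.take_sublist i J).sum_le_sum (fun _ _ => Nat.zero_le _)
      omega

theorem bis1_cross (J : List ℕ) (k : ℕ) (L : List ℕ) (a : ℕ)
    (h1 : J.sum < a) (h2 : a ≤ J.sum + k) : bis1 (J ++ k :: L) a = J ++ [k] := by
  rw [bis1, bisIdx_cross J k L a h1 h2, List.take_length_add_append]
  simp

theorem bis2_cross (J : List ℕ) (k : ℕ) (L : List ℕ) (a : ℕ)
    (h1 : J.sum < a) (h2 : a ≤ J.sum + k) : bis2 (J ++ k :: L) a = L := by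
  rw [bis2, bisIdx_cross J k L a h1 h2, List.drop_length_add_append]
  simp

/-- `σ^-` of a list beginning with `L ++ k :: M` exceeds `|L|` iff the initial segment `L k` fits. -/
theorem lt_sigmaMinus_iff (L : List ℕ) (k : ℕ) (M : List ℕ) (a : ℕ) (hk : 0 < k) :
    L.sum < sigmaMinus (L ++ k :: M) a ↔ L.sum + k ≤ a := by
  constructor
  · intro h
    by_contra! hlt
    rcases le_or_gt L.sum a with h3 | h3
    · rw [sigmaMinus_cross L k M a h3 hlt] at h
      omega
    · have : sigmaMinus (L ++ k :: M) a ≤ a := by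
        apply csSup_le
        · exact ⟨0, ⟨0, by simp, by simp⟩, by omega⟩
        · exact fun x hx => hx.2
      omega
  · intro h
    refine lt_of_lt_of_le (by omega : L.sum < L.sum + k) ?_
    apply le_csSup
    · exact ⟨a, fun x hx => hx.2⟩
    · exact ⟨⟨L.length + 1, by simp, take_length_succ_sum L k M⟩, h⟩

/-- All three clauses defining `S_{a,m,b}` amount to: `I` is nonempty, `|I| ≤ m - 2` and
`|J₂| + i_1 ≤ a`. -/
theorem Smem_iff (a m b : ℕ) (hm : 2 ≤ m) (I J : List ℕ) (hI : ∀ i ∈ I, 0 < i)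
    (hn : I.sum + J.sum = a + m + b) :
    Smem a m b I J ↔ I ≠ [] ∧ I.sum ≤ m - 2 ∧ (bis2 J (b + 1)).sum + I.headI ≤ a := by
  have hJ : (bis1 J (b + 1)).sum + (bis2 J (b + 1)).sum = J.sum := by
    rw [bis1, bis2, ← List.sum_append, List.take_append_drop]
  cases I with
  | nil => simp [Smem]
  | cons k I' =>
    have hk : 0 < k := hI k (by simp)
    have key : (bis2 J (b + 1)).sum <
        sigmaMinus (bis1 J (b + 1) ++ (k :: I').reverse ++ bis2 J (b + 1)).reverse a ↔
        (bis2 J (b + 1)).sum + k ≤ a := by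
      have := lt_sigmaMinus_iff (bis2 J (b + 1)).reverse k (I' ++ (bis1 J (b + 1)).reverse) a hk
      simpa using this
    have hI' : I' ≠ [] → 0 < I'.sum := by
      intro h
      cases I' with
      | nil => simp at h
      | cons c cs =>
        have := hI c (by simp)
        simp only [List.sum_cons]; omega
    rw [Smem, key]
    simp only [List.headI_cons, List.sum_cons, ne_eq, reduceCtorEq, not_false_eq_true, true_and]
      at hn ⊢
    omega

/-! ### Weighted sums over compositions -/

/-- `w'_I = ∏ (i_j - 1)`, over all the parts of `I`, the first one included. -/
def wT (l : List ℕ) : ℕ := (l.map (· - 1)).prod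

theorem wT_append (J L : List ℕ) : wT (J ++ L) = wT J * wT L := by simp [wT]

theorem wT_cons (k : ℕ) (L : List ℕ) : wT (k :: L) = (k - 1) * wT L := by simp [wT]

theorem wC_cons (k : ℕ) (L : List ℕ) : wC (k :: L) = k * wT L := rfl

theorem wC_cross (J : List ℕ) (k : ℕ) (L : List ℕ) :
    wC (J ++ k :: L) = wC (J ++ [k]) * wT L := by
  cases J with
  | nil => simp [wC, wT]
  | cons c cs => simp [wC, wT, mul_assoc]

section Sequences

variable {R : Type*} [CommRing R]

/-- `e_I = e_{i_1} ⋯ e_{i_s}` for an arbitrary sequence `e` in a commutative ring. -/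
def eL (e : ℕ → R) (l : List ℕ) : R := (l.map e).prod

theorem eL_append (e : ℕ → R) (J L : List ℕ) : eL e (J ++ L) = eL e J * eL e L := by simp [eL]

theorem eL_cons (e : ℕ → R) (k : ℕ) (L : List ℕ) : eL e (k :: L) = e k * eL e L := by simp [eL]

/-- `U_n = Σ_{I ⊨ n} w'_I e_I`. -/
def Uc (e : ℕ → R) (n : ℕ) : R := ∑ L ∈ comps n, (wT L : R) * eL e L

/-- `P_n = Σ_{I ⊨ n} w_I e_I`, which is the chromatic symmetric function of a path. -/
def Pc (e : ℕ → R) (n : ℕ) : R := ∑ L ∈ comps n, (wC L : R) * eL e L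

/-- `A_τ = Σ w_J e_J` over the compositions `J ⊨ b + 1 + τ` whose last part contains the
position `b + 1`. -/
def Ac (e : ℕ → R) (b τ : ℕ) : R :=
  ∑ u ∈ range (b + 1), ∑ J ∈ comps u,
    (wC (J ++ [b + 1 + τ - u]) : R) * eL e (J ++ [b + 1 + τ - u])

/-- `sum_cross` at the part containing the position `b + 1`, for a summand `F` that factors into
the weight of what precedes the end of this part and a function `Ψ` of what follows it. -/
theorem sum_crossA (e : ℕ → R) (b t : ℕ) (F : List ℕ → R) (Ψ : ℕ → List ℕ → R)
    (hF : ∀ u ≤ b, ∀ τ ≤ t, ∀ J ∈ comps u, ∀ L ∈ comps (t - τ),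
      F (J ++ (b + 1 + τ - u) :: L) =
        (wC (J ++ [b + 1 + τ - u]) : R) * eL e (J ++ [b + 1 + τ - u]) * Ψ τ L) :
    ∑ K ∈ comps (b + 1 + t), F K =
      ∑ τ ∈ range (t + 1), Ac e b τ * ∑ L ∈ comps (t - τ), Ψ τ L := by
  rw [sum_cross, sum_comm]
  refine sum_congr rfl fun τ hτ => ?_
  rw [Ac, sum_mul]
  refine sum_congr rfl fun u hu => ?_
  rw [sum_mul]
  refine sum_congr rfl fun J hJ => ?_
  rw [mul_sum]
  refine sum_congr rfl fun L hL => ?_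
  simp only [mem_range] at hτ hu
  exact hF u (by omega) τ (by omega) J hJ L hL

theorem Pc_crossA (e : ℕ → R) (b t : ℕ) :
    Pc e (b + 1 + t) = ∑ τ ∈ range (t + 1), Ac e b τ * Uc e (t - τ) := by
  rw [Pc, sum_crossA e b t _ (fun _ L => (wT L : R) * eL e L)]
  · rfl
  · intro u _ τ _ J _ L _
    rw [wC_cross, eL_append, eL_append, eL_cons]
    simp only [eL, List.map_cons, List.prod_cons, List.map_nil, List.prod_nil]
    push_cast
    ring

/-- The triple sums produced by cutting a composition at the positions `b + 1` and `b + 1 + j`,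
first when one part contains both positions (the coefficient `α`), then when the part
containing `b + 1 + j` is another part `c + 1 + κ` (the coefficient `β`). -/
def crossSum (e : ℕ → R) (a b j : ℕ) (α : R) (β : ℕ → ℕ → ℕ → R) : R :=
  ∑ c ∈ range (a + 1), Uc e (a - c) * (α * Ac e b (c + j) +
    ∑ κ ∈ range j, ∑ τ ∈ range (j - κ),
      β τ c κ * e (c + 1 + κ) * Ac e b τ * Uc e (j - 1 - κ - τ))

/-- A composition is cut at the part containing the position `b + 1`, and, when that part ends
before `b + 1 + j`, once more at the part containing `b + 1 + j`. -/
theorem sum_cross2 (e : ℕ → R) (a b j : ℕ) (F : List ℕ → R) (α : R) (β : ℕ → ℕ → ℕ → R)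
    (h1 : ∀ u ≤ b, ∀ c ≤ a, ∀ J ∈ comps u, ∀ L ∈ comps (a - c),
      F (J ++ (b + 1 + (c + j) - u) :: L) =
        (wC (J ++ [b + 1 + (c + j) - u]) : R) * eL e (J ++ [b + 1 + (c + j) - u]) *
          (α * ((wT L : R) * eL e L)))
    (h2 : ∀ u ≤ b, ∀ τ q κ, τ + q + κ + 1 = j → ∀ c ≤ a, ∀ J ∈ comps u, ∀ M ∈ comps q,
      ∀ L ∈ comps (a - c),
      F (J ++ (b + 1 + τ - u) :: (M ++ (c + 1 + κ) :: L)) =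
        (wC (J ++ [b + 1 + τ - u]) : R) * eL e (J ++ [b + 1 + τ - u]) *
          (((wT M : R) * eL e M) * (β τ c κ * e (c + 1 + κ)) * ((wT L : R) * eL e L))) :
    ∑ K ∈ comps (b + 1 + (a + j)), F K = crossSum e a b j α β := by
  rw [sum_cross, sum_comm]
  have split : a + j + 1 = j + (a + 1) := by ring
  rw [split, sum_range_add]
  have part2 : ∑ x ∈ range (a + 1), ∑ u ∈ range (b + 1), ∑ J ∈ comps u,
      ∑ L ∈ comps (a + j - (j + x)), F (J ++ (b + 1 + (j + x) - u) :: L) =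
      ∑ c ∈ range (a + 1), Uc e (a - c) * (α * Ac e b (c + j)) := by
    refine sum_congr rfl fun c hc => ?_
    rw [Ac, mul_sum, mul_sum]
    refine sum_congr rfl fun u hu => ?_
    rw [mul_sum, mul_sum]
    refine sum_congr rfl fun J hJ => ?_
    rw [Uc, sum_mul, show a + j - (j + c) = a - c by omega]
    refine sum_congr rfl fun L hL => ?_
    simp only [mem_range] at hc hu
    rw [add_comm j c, h1 u (by omega) c (by omega) J hJ L hL]
    ring
  have part1 : ∑ x ∈ range j, ∑ u ∈ range (b + 1), ∑ J ∈ comps u,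
      ∑ L ∈ comps (a + j - x), F (J ++ (b + 1 + x - u) :: L) =
      ∑ τ ∈ range j, ∑ q ∈ range (j - τ), ∑ c ∈ range (a + 1),
        Uc e (a - c) * (β τ c (j - 1 - τ - q) * e (c + 1 + (j - 1 - τ - q)) * Ac e b τ *
          Uc e q) := by
    refine sum_congr rfl fun τ hτ => ?_
    simp only [mem_range] at hτ
    have : ∀ u, ∀ J ∈ comps u, u ≤ b →
        ∑ L ∈ comps (a + j - τ), F (J ++ (b + 1 + τ - u) :: L) =
        ∑ q ∈ range (j - τ), ∑ c ∈ range (a + 1), Uc e (a - c) *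
          ((wC (J ++ [b + 1 + τ - u]) : R) * eL e (J ++ [b + 1 + τ - u])) *
          (β τ c (j - 1 - τ - q) * e (c + 1 + (j - 1 - τ - q)) * Uc e q) := by
      intro u J hJ hu
      have hlen : a + j - τ = (j - 1 - τ) + 1 + a := by omega
      rw [hlen, sum_cross, show j - 1 - τ + 1 = j - τ by omega]
      refine sum_congr rfl fun q hq => ?_
      refine sum_congr rfl fun c hc => ?_
      simp only [mem_range] at hq hc
      have hk : j - τ + c - q = c + 1 + (j - 1 - τ - q) := by omega
      rw [hk, sum_comm, Uc, Uc, sum_mul, sum_mul]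
      refine sum_congr rfl fun L hL => ?_
      rw [mul_sum, mul_sum]
      refine sum_congr rfl fun M hM => ?_
      rw [h2 u hu τ q (j - 1 - τ - q) (by omega) c (by omega) J hJ M hM L hL]
      ring
    calc _ = ∑ u ∈ range (b + 1), ∑ J ∈ comps u,
        ∑ q ∈ range (j - τ), ∑ c ∈ range (a + 1), Uc e (a - c) *
          ((wC (J ++ [b + 1 + τ - u]) : R) * eL e (J ++ [b + 1 + τ - u])) *
          (β τ c (j - 1 - τ - q) * e (c + 1 + (j - 1 - τ - q)) * Uc e q) := by
          refine sum_congr rfl fun u hu => sum_congr rfl fun J hJ => ?_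
          exact this u J hJ (by simp only [mem_range] at hu; omega)
      _ = _ := by
          simp_rw [Ac, mul_sum, sum_mul, mul_sum]
          simp_rw [sum_comm (s := comps _) (t := range (j - τ))]
          rw [sum_comm]
          refine sum_congr rfl fun q _ => ?_
          simp_rw [sum_comm (s := comps _) (t := range (a + 1))]
          rw [sum_comm]
          refine sum_congr rfl fun c _ => sum_congr rfl fun u _ => sum_congr rfl fun J _ => ?_
          ring
  rw [part1, part2, crossSum]
  simp_rw [mul_add, sum_add_distrib]
  rw [add_comm]
  congr 1
  simp_rw [mul_sum]
  simp_rw [sum_comm (t := range (a + 1))]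
  refine sum_congr rfl fun c _ => ?_
  simp_rw [sum_sigma']
  refine sum_nbij' (fun x => ⟨j - 1 - x.1 - x.2, x.1⟩) (fun x => ⟨x.2, j - 1 - x.1 - x.2⟩)
    ?_ ?_ ?_ ?_ ?_
  · rintro ⟨τ, q⟩ h
    simp only [mem_sigma, mem_range] at h ⊢
    omega
  · rintro ⟨τ, q⟩ h
    simp only [mem_sigma, mem_range] at h ⊢
    omega
  · rintro ⟨τ, q⟩ h
    simp only [mem_sigma, mem_range] at h
    simp only [Sigma.mk.injEq, heq_eq_eq, true_and]
    omega
  · rintro ⟨κ, τ⟩ h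
    simp only [mem_sigma, mem_range] at h
    simp only [Sigma.mk.injEq, heq_eq_eq, and_true]
    omega
  · rintro ⟨τ, q⟩ h
    simp only [mem_sigma, mem_range] at h
    simp only
    rw [show j - 1 - (j - 1 - τ - q) - τ = q by omega]

end Sequences

/-! ### Generating series -/

section Sequences2

variable {R : Type*} [CommRing R]

open PowerSeries in
theorem coeff_mk_mul_mk (f g : ℕ → R) (n : ℕ) :
    coeff n (mk f * mk g) = ∑ k ∈ range (n + 1), f k * g (n - k) := by
  rw [coeff_mul, Nat.sum_antidiagonal_eq_sum_range_succ_mk]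
  simp

theorem Uc_zero (e : ℕ → R) : Uc e 0 = 1 := by simp [Uc, comps_zero, wT, eL]

theorem Pc_zero (e : ℕ → R) : Pc e 0 = 1 := by simp [Pc, comps_zero, wC, eL]

theorem Uc_succ (e : ℕ → R) (n : ℕ) :
    Uc e (n + 1) = ∑ k ∈ range (n + 1), (k : R) * e (k + 1) * Uc e (n - k) := by
  rw [Uc, sum_comps_succ]
  refine sum_congr rfl fun k _ => ?_
  rw [Uc, mul_sum]
  refine sum_congr rfl fun L _ => ?_
  rw [wT_cons, eL_cons]
  simp
  ring

theorem Pc_succ (e : ℕ → R) (n : ℕ) :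
    Pc e (n + 1) = ∑ k ∈ range (n + 1), ((k + 1 : ℕ) : R) * e (k + 1) * Uc e (n - k) := by
  rw [Pc, sum_comps_succ]
  refine sum_congr rfl fun k _ => ?_
  rw [Uc, mul_sum]
  refine sum_congr rfl fun L _ => ?_
  rw [wC_cons, eL_cons]
  push_cast
  ring

open PowerSeries

/-- `P = E U`. -/
theorem mk_Pc (e : ℕ → R) (he : e 0 = 1) : mk (Pc e) = mk e * mk (Uc e) := by
  ext n
  rw [coeff_mk_mul_mk, coeff_mk]
  cases n with
  | zero => simp [Pc_zero, Uc_zero, he]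
  | succ n =>
    rw [sum_range_succ', he, Nat.sub_zero, Pc_succ, Uc_succ, one_mul, ← sum_add_distrib]
    refine sum_congr rfl fun k _ => ?_
    rw [show n + 1 - (k + 1) = n - k by omega]
    push_cast
    ring

/-- `P - 1 = z E' U`. -/
theorem mk_Pc_sub_one (e : ℕ → R) :
    mk (Pc e) - 1 = mk (fun k => (k : R) * e k) * mk (Uc e) := by
  ext n
  rw [map_sub, coeff_mk_mul_mk, coeff_mk]
  cases n with
  | zero => simp [Pc_zero]
  | succ n =>
    rw [sum_range_succ', Pc_succ, coeff_one]
    simp only [Nat.add_eq_zero_iff, one_ne_zero, and_false, if_false, sub_zero, Nat.cast_zero,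
      zero_mul, add_zero]
    refine sum_congr rfl fun k _ => ?_
    rw [show n + 1 - (k + 1) = n - k by omega]

theorem isUnit_mk_Uc (e : ℕ → R) : IsUnit (mk (Uc e)) := by
  rw [PowerSeries.isUnit_iff_constantCoeff]
  simp [← coeff_zero_eq_constantCoeff_apply, Uc_zero]

/-- The Euler operator `z d/dz` satisfies the Leibniz rule. -/
theorem euler_mul (f g h : ℕ → R) (hh : mk h = mk f * mk g) :
    mk (fun k => (k : R) * h k) =
      mk (fun k => (k : R) * f k) * mk g + mk f * mk (fun k => (k : R) * g k) := by
  ext n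
  have := congrArg (coeff n) hh
  rw [coeff_mk_mul_mk, coeff_mk] at this
  rw [map_add, coeff_mk_mul_mk, coeff_mk_mul_mk, coeff_mk, this, mul_sum, ← sum_add_distrib]
  refine sum_congr rfl fun k hk => ?_
  simp only [mem_range] at hk
  rw [Nat.cast_sub (by omega)]
  ring

variable (e : ℕ → R) (he : e 0 = 1) (b : ℕ) (G : ℕ → R)
  (hG : ∀ X, Pc e (b + 1 + X) = ∑ p ∈ range (X + 1), Pc e p * G (X - p))

include he hG

/-- `A = E G`, because `U A` and `P G = E U G` are both the series of the `P_{b+1+X}`. -/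
theorem mk_Ac : mk (Ac e b) = mk e * mk G := by
  have h1 : mk (Ac e b) * mk (Uc e) = mk (Pc e) * mk G := by
    ext n
    rw [coeff_mk_mul_mk, coeff_mk_mul_mk, ← hG, Pc_crossA]
  rw [mk_Pc e he] at h1
  apply (isUnit_mk_Uc e).mul_right_cancel
  rw [h1]
  ring

/-- `G + (z A') U = P G + P (z G')`, the Leibniz rule applied to `A = E G`. -/
theorem key_series : mk G + mk (fun k => (k : R) * Ac e b k) * mk (Uc e) =
    mk (Pc e) * mk G + mk (Pc e) * mk (fun k => (k : R) * G k) := by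
  have h1 := euler_mul e G (Ac e b) (mk_Ac e he b G hG)
  have h2 := mk_Pc_sub_one e
  rw [h1, eq_comm, ← sub_eq_zero]
  have h3 := mk_Pc e he
  have h4 : mk (Pc e) = 1 + mk (fun k => (k : R) * e k) * mk (Uc e) := by rw [← h2]; ring
  calc _ = mk (Pc e) * mk G - mk G - mk (fun k => (k : R) * e k) * mk G * mk (Uc e)
        + (mk (Pc e) - mk e * mk (Uc e)) * mk (fun k => (k : R) * G k) := by ring
    _ = 0 := by
      rw [h3, sub_self, zero_mul, add_zero, ← h3, h4]; ring

theorem key_coeff (X : ℕ) : G X + ∑ τ ∈ range (X + 1), (τ : R) * Ac e b τ * Uc e (X - τ) =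
    ∑ p ∈ range (X + 1), (((X - p : ℕ) : R) + 1) * (Pc e p * G (X - p)) := by
  have := congrArg (coeff X) (key_series e he b G hG)
  rw [map_add, map_add, coeff_mk_mul_mk, coeff_mk_mul_mk, coeff_mk_mul_mk, coeff_mk] at this
  rw [this, ← sum_add_distrib]
  refine sum_congr rfl fun p _ => ?_
  ring

theorem Ac_eq (t : ℕ) : Ac e b t = ∑ i ∈ range (t + 1), e (t - i) * G i := by
  have := congrArg (coeff t) (mk_Ac e he b G hG)
  rw [mul_comm, coeff_mk_mul_mk, coeff_mk] at this
  rw [this]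
  exact sum_congr rfl fun i _ => mul_comm _ _

/-- The sums `Σ_i P_{a-i} G_{j+i}` in terms of `U`, `A` and `G`. -/
theorem sum_Pc_G (a j : ℕ) :
    ∑ i ∈ range (a + 1), Pc e (a - i) * G (j + i) =
      ∑ c ∈ range (a + 1), Uc e (a - c) *
        (Ac e b (c + j) - ∑ κ ∈ range j, e (c + 1 + κ) * G (j - 1 - κ)) := by
  have h1 : mk (fun i => G (j + i)) * mk (Pc e) =
      (mk fun c => Ac e b (c + j) - ∑ κ ∈ range j, e (c + 1 + κ) * G (j - 1 - κ)) *
        mk (Uc e) := by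
    rw [mk_Pc e he, ← mul_assoc]
    congr 1
    ext c
    rw [coeff_mk_mul_mk, coeff_mk, Ac_eq e he b G hG, show c + j + 1 = j + (c + 1) by ring,
      sum_range_add (fun i => e (c + j - i) * G i) j (c + 1),
      ← sum_range_reflect (fun i => e (c + j - i) * G i) j]
    rw [eq_sub_iff_add_eq']
    congr 1
    all_goals
      apply Finset.sum_congr rfl
      intro i hi
    · simp only [mem_range] at hi
      rw [show c + j - (j - 1 - i) = c + 1 + i by omega]
    · simp only [mem_range] at hi
      rw [mul_comm, show c + j - (j + i) = c - i by omega]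
  have h2 := congrArg (coeff a) h1
  rw [coeff_mk_mul_mk, coeff_mk_mul_mk] at h2
  simp_rw [mul_comm (Pc e _), mul_comm (Uc e _)]
  exact h2

omit he hG in
theorem Pc_cross2 (a j : ℕ) : Pc e (b + 1 + (a + j)) =
    crossSum e a b j 1 (fun _ c κ => ((c + κ : ℕ) : R)) := by
  rw [Pc]
  apply sum_cross2
  · intro u _ c _ J _ L _
    rw [wC_cross, eL_append, eL_append, eL_cons, eL_cons]
    simp only [eL, List.map_nil, List.prod_nil]
    push_cast
    ring
  · intro u _ τ q κ _ c _ J _ M _ L _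
    rw [wC_cross, wT_append, wT_cons, eL_append, eL_append, eL_cons, eL_append, eL_cons, eL_cons,
      show c + 1 + κ - 1 = c + κ by omega]
    simp only [eL, List.map_nil, List.prod_nil]
    push_cast
    ring

/-- The identity behind the formula: the left-hand side is the chromatic symmetric function of the
hat, see `sum_hat`, and the right-hand side is the `e`-expansion, see `rhs_eq`. -/
theorem main_algebra (a j : ℕ) :
    Pc e (b + 1 + (a + j)) - ∑ i ∈ range (a + 1), Pc e (a - i) * G (j + i) +
      ∑ p ∈ range j, ((j - p : ℕ) : R) * Pc e p *
        ∑ i ∈ range (a + 1), Pc e (a - i) * G (j - p + i) =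
    ∑ c ∈ range (a + 1), Uc e (a - c) * (
      ∑ p ∈ range j, ((j - p : ℕ) : R) * Pc e p * Ac e b (c + (j - p)) -
      ∑ κ ∈ range j, ∑ τ ∈ range (j - κ),
        ((τ : R) - c) * e (c + 1 + κ) * Ac e b τ * Uc e (j - 1 - κ - τ)) := by
  simp_rw [sum_Pc_G e he b G hG]
  rw [Pc_cross2, crossSum, ← sum_sub_distrib]
  simp_rw [mul_sum (range (a + 1))]
  rw [sum_comm, ← sum_add_distrib]
  refine sum_congr rfl fun c _ => ?_
  have h1 : ∀ p, ((j - p : ℕ) : R) * Pc e p * (Uc e (a - c) * (Ac e b (c + (j - p)) -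
      ∑ κ ∈ range (j - p), e (c + 1 + κ) * G (j - p - 1 - κ))) =
      Uc e (a - c) * (((j - p : ℕ) : R) * Pc e p * Ac e b (c + (j - p)) -
        ∑ κ ∈ range (j - p), ((j - p : ℕ) : R) * Pc e p *
          (e (c + 1 + κ) * G (j - p - 1 - κ))) := by
    intro p
    rw [← mul_sum]
    ring
  simp_rw [h1]
  rw [← mul_sum, ← mul_sub, ← mul_add, sum_sub_distrib]
  congr 1
  have h2 : ∑ p ∈ range j, ∑ κ ∈ range (j - p), ((j - p : ℕ) : R) * Pc e p *
      (e (c + 1 + κ) * G (j - p - 1 - κ)) =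
      ∑ κ ∈ range j, ∑ p ∈ range (j - κ), ((j - p : ℕ) : R) * Pc e p *
      (e (c + 1 + κ) * G (j - p - 1 - κ)) := by
    apply sum_comm'
    intro x y
    simp only [mem_range]
    omega
  rw [h2]
  have h3 : ∀ κ ∈ range j,
      ∑ τ ∈ range (j - κ), ((c + κ : ℕ) : R) * e (c + 1 + κ) * Ac e b τ * Uc e (j - 1 - κ - τ) +
      e (c + 1 + κ) * G (j - 1 - κ) -
      ∑ p ∈ range (j - κ), ((j - p : ℕ) : R) * Pc e p * (e (c + 1 + κ) * G (j - p - 1 - κ)) =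
      - ∑ τ ∈ range (j - κ),
        ((τ : R) - c) * e (c + 1 + κ) * Ac e b τ * Uc e (j - 1 - κ - τ) := by
    intro κ hκ
    simp only [mem_range] at hκ
    obtain ⟨X, rfl⟩ : ∃ X, j = X + 1 + κ := ⟨j - 1 - κ, by omega⟩
    have e1 : X + 1 + κ - κ = X + 1 := by omega
    have e2 : X + 1 + κ - 1 - κ = X := by omega
    rw [e1, e2]
    have hQ := hG X
    rw [Pc_crossA] at hQ
    have hk := key_coeff e he b G hG X
    have s1 : ∑ p ∈ range (X + 1), ((X + 1 + κ - p : ℕ) : R) * Pc e p *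
        (e (c + 1 + κ) * G (X + 1 + κ - p - 1 - κ)) =
        e (c + 1 + κ) * (∑ p ∈ range (X + 1), (((X - p : ℕ) : R) + 1) * (Pc e p * G (X - p)) +
          κ * ∑ p ∈ range (X + 1), Pc e p * G (X - p)) := by
      rw [mul_sum (a := (κ : R)), ← sum_add_distrib, mul_sum]
      refine sum_congr rfl fun p hp => ?_
      simp only [mem_range] at hp
      rw [show X + 1 + κ - p - 1 - κ = X - p by omega,
        show X + 1 + κ - p = X - p + 1 + κ by omega]
      push_cast
      ring
    rw [s1, ← hk, ← hQ]
    simp_rw [mul_add, mul_sum]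
    rw [← sub_eq_zero, sub_neg_eq_add]
    have : ∀ x y z w v : R, x + y - (y + z + w) + v = x - z - w + v := by intros; ring
    rw [this, ← sum_sub_distrib, ← sum_sub_distrib, ← sum_add_distrib]
    apply sum_eq_zero
    intro τ _
    push_cast
    ring
  have h4 := sum_congr rfl h3
  rw [sum_sub_distrib, sum_add_distrib, sum_neg_distrib] at h4
  linear_combination h4

end Sequences2

/-! ### The right-hand side of the formula -/

/-- If one part contains both positions `b + 1` and `b + m`, then `N_K = m - 1`. -/
theorem NK_cross1 (b j u c : ℕ) (hu : u ≤ b) (J L : List ℕ) (hJ : J.sum = u) :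
    NK b (j + 1) (J ++ (b + 1 + (c + j) - u) :: L) = j := by
  rw [NK, thetaPlus, thetaPlus, sigmaPlus_cross _ _ _ _ (by omega) (by omega),
    sigmaPlus_cross _ _ _ _ (by omega) (by omega)]
  omega

/-- The statistics of `K` when the positions `b + 1` and `b + m` lie in different parts, with
`j = m - 1`. -/
theorem theta_cross2 (b j u τ q κ c : ℕ) (hj : τ + q + κ + 1 = j) (hu : u ≤ b)
    (J M L : List ℕ) (hJ : J.sum = u) (hM : M.sum = q) :
    thetaPlus (J ++ (b + 1 + τ - u) :: (M ++ (c + 1 + κ) :: L)) (b + 1) = τ ∧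
    thetaPlus (J ++ (b + 1 + τ - u) :: (M ++ (c + 1 + κ) :: L)) (b + (j + 1)) = c ∧
    thetaMinus (J ++ (b + 1 + τ - u) :: (M ++ (c + 1 + κ) :: L)) (b + (j + 1) - 1) = κ := by
  refine ⟨?_, ?_, ?_⟩
  · rw [thetaPlus, sigmaPlus_cross _ _ _ _ (by omega) (by omega)]
    omega
  · have : J ++ (b + 1 + τ - u) :: (M ++ (c + 1 + κ) :: L) =
        (J ++ (b + 1 + τ - u) :: M) ++ (c + 1 + κ) :: L := by simp
    have hs : (J ++ (b + 1 + τ - u) :: M).sum = b + 1 + τ + q := by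
      simp only [List.sum_append, List.sum_cons]; omega
    rw [this, thetaPlus, sigmaPlus_cross _ _ _ _ (by omega) (by omega)]
    omega
  · have : J ++ (b + 1 + τ - u) :: (M ++ (c + 1 + κ) :: L) =
        (J ++ (b + 1 + τ - u) :: M) ++ (c + 1 + κ) :: L := by simp
    have hs : (J ++ (b + 1 + τ - u) :: M).sum = b + 1 + τ + q := by
      simp only [List.sum_append, List.sum_cons]; omega
    rw [this, thetaMinus, sigmaMinus_cross _ _ _ _ (by omega) (by omega)]
    omega

/-- The rational coefficient of `e_K` contributed by the two sums over single compositions. -/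
noncomputable def coefQ (b m : ℕ) (K : List ℕ) : ℚ :=
  (if NK b m K ≤ -1 then
    ((-(NK b m K) : ℚ) * (wC K : ℚ)) /
      ((thetaPlus K (b + m) + thetaMinus K (b + m - 1) : ℕ) : ℚ) else 0) +
  (if 1 ≤ NK b m K then ((NK b m K) : ℚ) * (wC K : ℚ) else 0)

theorem coefQ_cross1 (b j u c : ℕ) (hu : u ≤ b) (J L : List ℕ) (hJ : J.sum = u) :
    coefQ b (j + 1) (J ++ (b + 1 + (c + j) - u) :: L) =
      j * ((wC (J ++ [b + 1 + (c + j) - u]) : ℚ) * wT L) := by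
  rw [coefQ, NK_cross1 b j u c hu J L hJ, wC_cross, if_neg (by omega), zero_add]
  split_ifs with h
  · push_cast; ring
  · have : j = 0 := by omega
    subst this
    simp

/-- When the part `k = c + 1 + κ` at the position `b + m` differs from the one at `b + 1`, the
denominator is `k - 1`, which cancels against the factor `k - 1` of `w_K`. -/
theorem coefQ_cross2 (b j u τ q κ c : ℕ) (hj : τ + q + κ + 1 = j) (hu : u ≤ b)
    (J M L : List ℕ) (hJ : J.sum = u) (hM : M.sum = q) :
    coefQ b (j + 1) (J ++ (b + 1 + τ - u) :: (M ++ (c + 1 + κ) :: L)) =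
      ((c + 1 + κ : ℕ) * (τ - c : ℕ) - ((τ : ℚ) - c)) *
      ((wC (J ++ [b + 1 + τ - u]) : ℚ) * (wT M * wT L)) := by
  obtain ⟨h1, h2, h3⟩ := theta_cross2 b j u τ q κ c hj hu J M L hJ hM
  rw [coefQ, NK, h1, h2, h3, wC_cross, wT_append, wT_cons, show c + 1 + κ - 1 = c + κ by omega]
  rcases lt_trichotomy τ c with h | h | h
  · rw [if_pos (by omega), if_neg (by omega), show τ - c = 0 by omega]
    have : ((c + κ : ℕ) : ℚ) ≠ 0 := by
      have : c + κ ≠ 0 := by omega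
      exact_mod_cast this
    push_cast at this ⊢
    field_simp
    ring
  · subst h
    rw [if_neg (by omega), if_neg (by omega)]
    simp
  · rw [if_neg (by omega), if_pos (by omega), Nat.cast_sub h.le]
    push_cast
    ring

section

variable {R : Type*} [CommRing R] [Algebra ℚ R]

theorem sum_coefQ (e : ℕ → R) (a b j : ℕ) :
    ∑ K ∈ comps (b + 1 + (a + j)), coefQ b (j + 1) K • eL e K =
      crossSum e a b j (j : R)
        (fun τ c κ => ((c + 1 + κ : ℕ) : R) * ((τ - c : ℕ) : R) - ((τ : R) - c)) := by
  apply sum_cross2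
  · intro u hu c _ J hJ L _
    rw [coefQ_cross1 b j u c hu J L (mem_comps.1 hJ).2, Algebra.smul_def]
    simp only [map_mul, map_natCast, eL_append, eL_cons]
    simp only [eL, List.map_nil, List.prod_nil]
    ring
  · intro u hu τ q κ hj c _ J hJ M hM L _
    rw [coefQ_cross2 b j u τ q κ c hj hu J M L (mem_comps.1 hJ).2 (mem_comps.1 hM).2,
      Algebra.smul_def]
    simp only [map_mul, map_sub, map_natCast, eL_append, eL_cons]
    simp only [eL, List.map_nil, List.prod_nil]
    ring

open Classical in
/-- The third sum of the formula, over the index set `S_{a,m,b}` with `m = j + 1`. -/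
noncomputable def sumS (e : ℕ → R) (a b j : ℕ) : R :=
  ∑ p ∈ range (a + (j + 1) + b + 1), ∑ I ∈ comps p, ∑ J ∈ comps (a + (j + 1) + b - p),
    if Smem a (j + 1) b I J then
      ((((j + 1 : ℕ) : ℚ) - 1 - (p : ℚ)) * ((wC I * wC J : ℕ) : ℚ)) • eL e (I ++ J) else 0

omit [Algebra ℚ R] in
open Classical in
theorem sum_J (e : ℕ → R) (a b j p k : ℕ) (hp : p < j) :
    ∑ J ∈ comps (b + 1 + (a + j - p)),
      (if (bis2 J (b + 1)).sum + (k + 1) ≤ a then (wC J : R) * eL e J else 0) =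
    ∑ c ∈ range (a + 1), if k < c then Ac e b (c + (j - p)) * Uc e (a - c) else 0 := by
  rw [sum_crossA e b (a + j - p) _
    (fun τ L => if j + k < p + τ then (wT L : R) * eL e L else 0)]
  · have : ∀ τ, Ac e b τ * ∑ L ∈ comps (a + j - p - τ),
        (if j + k < p + τ then (wT L : R) * eL e L else 0) =
        if j + k < p + τ then Ac e b τ * Uc e (a + j - p - τ) else 0 := by
      intro τ
      split_ifs with h
      · rfl
      · simp
    simp_rw [this]
    rw [← sum_filter, ← sum_filter]
    refine sum_nbij' (fun τ => τ + p - j) (fun c => c + (j - p)) ?_ ?_ ?_ ?_ ?_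
    all_goals
      intro x hx
      simp only [mem_filter, mem_range] at hx ⊢
      try omega
    rw [show x + p - j + (j - p) = x by omega, show a - (x + p - j) = a + j - p - x by omega]
  · intro u hu τ hτ J hJ L hL
    rw [bis2_cross _ _ _ _ (by rw [(mem_comps.1 hJ).2]; omega)
      (by rw [(mem_comps.1 hJ).2]; omega), (mem_comps.1 hL).2, wC_cross]
    simp only [eL_append, eL_cons]
    by_cases h : j + k < p + τ
    · rw [if_pos h, if_pos (by omega)]
      simp only [eL, List.map_nil, List.prod_nil]
      push_cast
      ring
    · rw [if_neg h, if_neg (by omega), mul_zero]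

/-- In `sumS` the first part `k + 1` of `I` is split off, and `J` is cut at the position `b + 1`. -/
theorem sumS_eq (e : ℕ → R) (a b j : ℕ) (hj : 1 ≤ j) :
    sumS e a b j = ∑ c ∈ range (a + 1), Uc e (a - c) * ∑ p ∈ range j, ((j - p : ℕ) : R) *
      Ac e b (c + (j - p)) *
      ∑ k ∈ range p, if k < c then ((k + 1 : ℕ) : R) * e (k + 1) * Uc e (p - 1 - k) else 0 := by
  classical
  have hbig : a + (j + 1) + b + 1 = j + (a + b + 2) := by ring
  rw [sumS, hbig, sum_range_add, add_comm]
  have h0 : ∑ x ∈ range (a + b + 2), ∑ I ∈ comps (j + x),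
      ∑ J ∈ comps (a + (j + 1) + b - (j + x)), (if Smem a (j + 1) b I J then
      ((((j + 1 : ℕ) : ℚ) - 1 - ((j + x : ℕ) : ℚ)) * ((wC I * wC J : ℕ) : ℚ)) • eL e (I ++ J)
      else 0) = 0 := by
    refine sum_eq_zero fun x hx => sum_eq_zero fun I hI => sum_eq_zero fun J hJ => ?_
    simp only [mem_range] at hx
    rw [mem_comps] at hI hJ
    rw [if_neg]
    rw [Smem_iff a (j + 1) b (by omega) I J hI.1 (by omega)]
    omega
  rw [h0, zero_add]
  simp_rw [mul_sum]
  rw [sum_comm]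
  refine sum_congr rfl fun p hp => ?_
  simp only [mem_range] at hp
  cases p with
  | zero =>
    simp only [comps_zero, sum_singleton, range_zero, sum_empty, sum_const_zero]
    refine sum_eq_zero fun J hJ => ?_
    rw [mem_comps] at hJ
    rw [if_neg]
    rw [Smem_iff a (j + 1) b (by omega) [] J (by simp) (by simp; omega)]
    simp
  | succ p =>
    rw [sum_comps_succ, sum_comm (s := range (a + 1))]
    refine sum_congr rfl fun k hk => ?_
    simp only [mem_range] at hk
    have hJ := sum_J e a b j (p + 1) k hp
    have : ∀ I ∈ comps (p - k), ∑ J ∈ comps (a + (j + 1) + b - (p + 1)),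
        (if Smem a (j + 1) b ((k + 1) :: I) J then
          ((((j + 1 : ℕ) : ℚ) - 1 - ((p + 1 : ℕ) : ℚ)) * ((wC ((k + 1) :: I) * wC J : ℕ) : ℚ)) •
            eL e (((k + 1) :: I) ++ J) else 0) =
        ((wT I : R) * eL e I) * (((j - (p + 1) : ℕ) : R) * ((k + 1 : ℕ) : R) * e (k + 1)) *
        ∑ c ∈ range (a + 1), if k < c then Ac e b (c + (j - (p + 1))) * Uc e (a - c) else 0 := by
      intro I hI
      rw [← hJ, mul_sum, show a + (j + 1) + b - (p + 1) = b + 1 + (a + j - (p + 1)) by omega]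
      refine sum_congr rfl fun J hJ => ?_
      rw [mem_comps] at hI hJ
      have hS := Smem_iff a (j + 1) b (by omega) ((k + 1) :: I) J
        (by
          intro i hi
          rcases List.mem_cons.1 hi with rfl | hi
          · omega
          · exact hI.1 i hi)
        (by simp only [List.sum_cons]; omega)
      simp only [List.headI_cons, List.sum_cons, ne_eq, reduceCtorEq, not_false_eq_true,
        true_and] at hS
      by_cases h : (bis2 J (b + 1)).sum + (k + 1) ≤ a
      · rw [if_pos h, if_pos (hS.2 ⟨by omega, h⟩), Algebra.smul_def, wC_cons, eL_append, eL_cons]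
        have : (((j + 1 : ℕ) : ℚ) - 1 - ((p + 1 : ℕ) : ℚ)) = ((j - (p + 1) : ℕ) : ℚ) := by
          rw [Nat.cast_sub (by omega)]
          push_cast
          ring
        rw [this]
        simp only [map_mul, map_natCast, Nat.cast_mul]
        ring
      · rw [if_neg h, if_neg (fun hh => h (hS.1 hh).2), mul_zero]
    rw [sum_congr rfl this, ← sum_mul, ← sum_mul]
    change Uc e (p - k) * _ * _ = _
    rw [mul_sum]
    refine sum_congr rfl fun c _ => ?_
    rw [show p + 1 - 1 - k = p - k by omega]
    split_ifs
    · ring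
    · simp

end

section

variable {R : Type*} [CommRing R]

/-- The substitution `p = c + j - τ`, `k = c + κ`. -/
theorem sum_reindex (e A U : ℕ → R) (c j : ℕ) :
    ∑ κ ∈ range j, ∑ τ ∈ range (j - κ),
      ((c + 1 + κ : ℕ) : R) * ((τ - c : ℕ) : R) * e (c + 1 + κ) * A τ * U (j - 1 - κ - τ) =
    ∑ p ∈ range j, ((j - p : ℕ) : R) * A (c + (j - p)) *
      ∑ k ∈ range p, if k < c then 0 else ((k + 1 : ℕ) : R) * e (k + 1) * U (p - 1 - k) := by
  simp_rw [mul_sum]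
  rw [sum_sigma', sum_sigma']
  refine sum_bij_ne_zero (fun x _ _ => ⟨c + j - x.2, c + x.1⟩) ?_ ?_ ?_ ?_
  · rintro ⟨κ, τ⟩ hx h0
    simp only [mem_sigma, mem_range] at hx ⊢
    have : c < τ := by
      by_contra h
      apply h0
      rw [show τ - c = 0 by omega]
      simp
    omega
  · rintro ⟨κ, τ⟩ hx h0 ⟨κ', τ'⟩ hx' h0' h
    simp only [mem_sigma, mem_range, Sigma.mk.injEq, heq_eq_eq] at hx hx' h ⊢
    omega
  · rintro ⟨p, k⟩ hx h0
    simp only [mem_sigma, mem_range] at hx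
    have hk : ¬ k < c := by
      intro h
      apply h0
      simp [h]
    refine ⟨⟨k - c, c + (j - p)⟩, ?_, ?_, ?_⟩
    · simp only [mem_sigma, mem_range]
      omega
    · intro h
      apply h0
      rw [← h]
      dsimp only
      rw [if_neg hk, show c + 1 + (k - c) = k + 1 by omega, show c + (j - p) - c = j - p by omega,
        show j - 1 - (k - c) - (c + (j - p)) = p - 1 - k by omega]
      ring
    · simp only [Sigma.mk.injEq, heq_eq_eq]
      omega
  · rintro ⟨κ, τ⟩ hx h0
    simp only [mem_sigma, mem_range] at hx
    have hc : c < τ := by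
      by_contra h
      apply h0
      rw [show τ - c = 0 by omega]
      simp
    dsimp only
    rw [if_neg (by omega), show c + κ + 1 = c + 1 + κ by omega,
      show j - (c + j - τ) = τ - c by omega, show c + (τ - c) = τ by omega,
      show c + j - τ - 1 - (c + κ) = j - 1 - κ - τ by omega]
    ring

/-- The right-hand side of the formula, organised by the overshoot `c` of the part of the
composition that contains the position `b + m`. -/
theorem rhs_eq [Algebra ℚ R] (e : ℕ → R) (a b j : ℕ) (hj : 1 ≤ j) :
    ∑ K ∈ comps (b + 1 + (a + j)), coefQ b (j + 1) K • eL e K + sumS e a b j =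
    ∑ c ∈ range (a + 1), Uc e (a - c) * (
      ∑ p ∈ range j, ((j - p : ℕ) : R) * Pc e p * Ac e b (c + (j - p)) -
      ∑ κ ∈ range j, ∑ τ ∈ range (j - κ),
        ((τ : R) - c) * e (c + 1 + κ) * Ac e b τ * Uc e (j - 1 - κ - τ)) := by
  rw [sum_coefQ, sumS_eq e a b j hj, crossSum, ← sum_add_distrib]
  refine sum_congr rfl fun c _ => ?_
  rw [← mul_add]
  congr 1
  have h1 := sum_reindex e (Ac e b) (Uc e) c j
  have h2 : ∀ p, ((j - p : ℕ) : R) * Pc e p * Ac e b (c + (j - p)) =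
      (if p = 0 then (j : R) * Ac e b (c + j) else 0) +
      (((j - p : ℕ) : R) * Ac e b (c + (j - p)) *
        (∑ k ∈ range p, if k < c then 0 else ((k + 1 : ℕ) : R) * e (k + 1) * Uc e (p - 1 - k)) +
      ((j - p : ℕ) : R) * Ac e b (c + (j - p)) *
        ∑ k ∈ range p, if k < c then ((k + 1 : ℕ) : R) * e (k + 1) * Uc e (p - 1 - k) else 0) := by
    intro p
    rw [← mul_add, ← sum_add_distrib]
    cases p with
    | zero => simp [Pc_zero]
    | succ p =>
      rw [if_neg (by omega), zero_add, Pc_succ]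
      have : ∀ k ∈ range (p + 1), ((if k < c then 0 else
          ((k + 1 : ℕ) : R) * e (k + 1) * Uc e (p + 1 - 1 - k)) +
          if k < c then ((k + 1 : ℕ) : R) * e (k + 1) * Uc e (p + 1 - 1 - k) else 0) =
          ((k + 1 : ℕ) : R) * e (k + 1) * Uc e (p - k) := by
        intro k _
        rw [Nat.add_sub_cancel]
        split_ifs <;> simp
      rw [sum_congr rfl this]
      ring
  simp_rw [h2]
  rw [sum_add_distrib, sum_add_distrib, sum_ite_eq' (range j) 0 (fun _ => (j : R) * Ac e b (c + j)),
    if_pos (mem_range.2 hj), ← h1]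
  simp_rw [sub_mul, sum_sub_distrib]
  ring

end

/-! ### Proper colourings of the hat by finitely many colours -/

section Colors

variable {σ R : Type*} [Fintype σ] [CommRing R] (x : σ → R)

/-- The elementary symmetric polynomials in the finitely many variables `x_c`. -/
def eF (k : ℕ) : R := ∑ s ∈ powersetCard k (univ : Finset σ), ∏ i ∈ s, x i

theorem eF_zero : eF x 0 = 1 := by simp [eF]

/-- Newton's identities, in the form `k e_k = Σ_{i<k} e_i Σ_c x_c (-x_c)^{k-1-i}`. -/
theorem newton (k : ℕ) : ((k + 1 : ℕ) : R) * eF x (k + 1) =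
    ∑ i ∈ range (k + 1), eF x i * ∑ c, x c * (- x c) ^ (k - i) := by
  have h := congrArg (MvPolynomial.aeval x) (MvPolynomial.mul_esymm_eq_sum σ R (k + 1))
  have he : ∀ i, MvPolynomial.aeval x (MvPolynomial.esymm σ R i) = eF x i := by
    intro i
    simp [MvPolynomial.esymm, eF, map_sum, map_prod]
  have hp : ∀ i, MvPolynomial.aeval x (MvPolynomial.psum σ R i) = ∑ c, x c ^ i := by
    intro i
    simp [MvPolynomial.psum]
  simp only [map_mul, map_natCast, map_pow, map_neg, map_one, map_sum, he, hp] at h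
  rw [h, sum_filter, Nat.sum_antidiagonal_eq_sum_range_succ_mk, sum_range_succ, if_neg (by simp),
    add_zero, mul_sum]
  refine sum_congr rfl fun i hi => ?_
  simp only [mem_range] at hi
  rw [if_pos hi, mul_sum, mul_sum, mul_sum]
  refine sum_congr rfl fun c _ => ?_
  obtain ⟨t, rfl⟩ : ∃ t, k = i + t := ⟨k - i, by omega⟩
  rw [show i + t + 1 - i = t + 1 by omega, show i + t - i = t by omega, neg_pow (x c) t]
  have : (-1 : R) ^ (i + t + 1 + 1) * (-1) ^ i = (-1) ^ t := by
    rw [← pow_add, show i + t + 1 + 1 + i = t + 2 * (i + 1) by ring, pow_add, pow_mul]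
    simp
  linear_combination eF x i * x c ^ (t + 1) * this

/-- `⟨f⟩ = Σ_c x_c f(c)`. -/
def br (f : σ → R) : R := ∑ c, x c * f c

/-- The transfer operator `(T f)(c) = Σ_{c' ≠ c} x_{c'} f(c')` of the path. -/
def tr (f : σ → R) : σ → R := fun c => br x f - x c * f c

/-- `h_k = Σ_i (-x)^i P_{k-i}`. -/
def hF (k : ℕ) : σ → R := fun c => ∑ i ∈ range (k + 1), (- x c) ^ i * Pc (eF x) (k - i)

theorem hF_zero : hF x 0 = fun _ => 1 := by
  funext c
  simp [hF, Pc_zero]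

open PowerSeries in
/-- `P - 1 = z p̃ P`, where `p̃` is the series with coefficients `Σ_c x_c (-x_c)^i`: this is `z E' U`
rewritten by Newton's identities `z E' = z p̃ E`. -/
theorem Pc_eq_br (k : ℕ) : Pc (eF x) (k + 1) = br x (hF x k) := by
  have h1 : PowerSeries.mk (fun k => (k : R) * eF x k) =
      (X * PowerSeries.mk (fun i => ∑ c, x c * (- x c) ^ i)) * PowerSeries.mk (eF x) := by
    ext n
    cases n with
    | zero => simp
    | succ n =>
      rw [mul_assoc, coeff_succ_X_mul, mul_comm, coeff_mk_mul_mk, coeff_mk, newton]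
  have h2 : PowerSeries.mk (Pc (eF x)) - 1 =
      X * (PowerSeries.mk (fun i => ∑ c, x c * (- x c) ^ i) * PowerSeries.mk (Pc (eF x))) := by
    rw [mk_Pc_sub_one, h1, mk_Pc _ (eF_zero x)]
    ring
  have h3 := congrArg (coeff (k + 1)) h2
  rw [coeff_succ_X_mul, coeff_mk_mul_mk, map_sub, coeff_one, if_neg (by omega), coeff_mk,
    sub_zero] at h3
  rw [h3, br]
  simp_rw [hF, mul_sum, sum_mul]
  rw [sum_comm]
  simp_rw [mul_assoc]

theorem tr_hF (k : ℕ) : tr x (hF x k) = hF x (k + 1) := by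
  funext c
  rw [tr, ← Pc_eq_br, hF, hF, sum_range_succ' _ (k + 1), mul_sum]
  rw [pow_zero, one_mul, Nat.sub_zero, add_comm _ (Pc _ _), sub_eq_add_neg, ← sum_neg_distrib]
  congr 1
  refine sum_congr rfl fun i _ => ?_
  rw [show k + 1 - (i + 1) = k - i by omega]
  ring

theorem tr_iter_one (k : ℕ) : (tr x)^[k] (fun _ => 1) = hF x k := by
  induction k with
  | zero => simp [hF_zero]
  | succ k ih => rw [Function.iterate_succ_apply', ih, tr_hF]

theorem tr_smul (s : R) (f : σ → R) : tr x (s • f) = s • tr x f := by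
  funext c
  simp only [tr, br, Pi.smul_apply, smul_eq_mul, mul_sub, mul_sum]
  congr 1
  · exact sum_congr rfl fun _ _ => by ring
  · ring

theorem tr_sub (f g : σ → R) : tr x (f - g) = tr x f - tr x g := by
  funext c
  simp only [tr, br, Pi.sub_apply, mul_sub, sum_sub_distrib]
  ring

theorem tr_iter_smul (s : R) (k : ℕ) (f : σ → R) : (tr x)^[k] (s • f) = s • (tr x)^[k] f := by
  induction k generalizing f with
  | zero => rfl
  | succ k ih => rw [Function.iterate_succ_apply, tr_smul, ih, Function.iterate_succ_apply]

theorem tr_iter_sub (k : ℕ) (f g : σ → R) :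
    (tr x)^[k] (f - g) = (tr x)^[k] f - (tr x)^[k] g := by
  induction k generalizing f g with
  | zero => rfl
  | succ k ih => simp only [Function.iterate_succ_apply, tr_sub, ih]

/-- `T` is self-adjoint for the pairing `⟨f g⟩`. -/
theorem br_tr (f g : σ → R) : br x (tr x f * g) = br x (f * tr x g) := by
  have h : ∀ f g : σ → R, br x (tr x f * g) = br x f * br x g - ∑ c, x c * (x c * (f c * g c)) := by
    intro f g
    rw [br, br, br, sum_mul_sum, sum_comm, ← sum_sub_distrib]
    refine sum_congr rfl fun c _ => ?_
    rw [← sum_mul, Pi.mul_apply, tr, br]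
    ring
  rw [h, mul_comm f, h, mul_comm (br x f)]
  congr 1
  exact sum_congr rfl fun _ _ => by ring

/-- `⟨T^X 1, T^b 1⟩` only depends on `X + b`. -/
theorem br_hF_hF (X b : ℕ) : br x (hF x X * hF x b) = Pc (eF x) (b + 1 + X) := by
  induction X generalizing b with
  | zero =>
    rw [Nat.add_zero, Pc_eq_br, hF_zero]
    congr 1
    funext c
    simp
  | succ X ih =>
    rw [← tr_hF, br_tr, tr_hF, ih, show b + 1 + 1 + X = b + 1 + (X + 1) by ring]

/-- `G_i = ⟨(-x)^i h_b⟩`. -/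
def GF (b i : ℕ) : R := br x (fun c => (- x c) ^ i * hF x b c)

theorem br_pow (a b j : ℕ) : br x (fun c => (- x c) ^ j * (hF x a c * hF x b c)) =
    ∑ i ∈ range (a + 1), Pc (eF x) (a - i) * GF x b (j + i) := by
  simp_rw [GF, br, mul_sum]
  rw [sum_comm]
  refine sum_congr rfl fun c _ => ?_
  rw [hF, sum_mul, mul_sum, mul_sum]
  refine sum_congr rfl fun i _ => ?_
  ring

/-- The defining relation of the sequence `G` in `main_algebra`. -/
theorem Pc_GF (b X : ℕ) : Pc (eF x) (b + 1 + X) =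
    ∑ p ∈ range (X + 1), Pc (eF x) p * GF x b (X - p) := by
  rw [← br_hF_hF, ← sum_range_reflect]
  have := br_pow x X b 0
  simp only [pow_zero, one_mul, zero_add] at this
  change br x (fun c => hF x X c * hF x b c) = _
  rw [this]
  refine sum_congr rfl fun p hp => ?_
  simp only [mem_range] at hp
  rw [show X + 1 - 1 - p = X - p by omega, show X - (X - p) = p by omega]

variable [DecidableEq σ]

/-- The indicator function of the colour `c`. -/
def dl (c : σ) : σ → R := fun c' => if c' = c then 1 else 0

theorem br_dl (c : σ) (f : σ → R) : br x (dl c * f) = x c * f c := by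
  simp [br, dl]

/-- `d_j(c) = (T^j δ_c)(c)`, the generating function of closed walks. -/
theorem tr_iter_dl (j : ℕ) (c : σ) : (tr x)^[j] (dl c) c =
    (- x c) ^ j - ∑ p ∈ range j, ((j - p : ℕ) : R) * Pc (eF x) p * (- x c) ^ (j - p) := by
  induction j with
  | zero => simp [dl]
  | succ j ih =>
    have h1 : tr x (dl c) = x c • ((fun _ => 1) - dl c) := by
      funext c'
      have := br_dl x c (fun _ => 1)
      simp only [mul_one] at this
      have h2 : br x (dl c) = x c := by
        rw [← this]
        congr 1
        funext c'
        simp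
      rw [tr, h2]
      by_cases h : c' = c
      · simp [dl, h]
      · simp [dl, h]
    rw [Function.iterate_succ_apply, h1, tr_iter_smul, tr_iter_sub, tr_iter_one]
    simp only [Pi.smul_apply, Pi.sub_apply, smul_eq_mul, ih]
    rw [hF, ← sum_range_reflect]
    have h3 : ∑ p ∈ range (j + 1), ((j + 1 - p : ℕ) : R) * Pc (eF x) p * (- x c) ^ (j + 1 - p) =
        (- x c) * (∑ p ∈ range (j + 1), (- x c) ^ (j + 1 - 1 - p) *
          Pc (eF x) (j - (j + 1 - 1 - p))) + (- x c) *
        ∑ p ∈ range j, ((j - p : ℕ) : R) * Pc (eF x) p * (- x c) ^ (j - p) := by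
      have : ∑ p ∈ range j, ((j - p : ℕ) : R) * Pc (eF x) p * (- x c) ^ (j - p) =
          ∑ p ∈ range (j + 1), ((j - p : ℕ) : R) * Pc (eF x) p * (- x c) ^ (j - p) := by
        rw [sum_range_succ]
        simp
      rw [this, mul_sum, mul_sum, ← sum_add_distrib]
      refine sum_congr rfl fun p hp => ?_
      simp only [mem_range] at hp
      rw [show j + 1 - 1 - p = j - p by omega, show j - (j - p) = p by omega,
        show j + 1 - p = j - p + 1 by omega]
      push_cast
      ring
    rw [h3]
    ring

/-- The monomial of a colouring of a path if it is proper, and `0` otherwise. -/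
def wt {n : ℕ} (κ : Fin n → σ) : R :=
  (∏ i, x (κ i)) * if ∀ i j : Fin n, (i : ℕ) + 1 = j → κ i ≠ κ j then 1 else 0

omit [Fintype σ] in
theorem wt_cons {n : ℕ} (c : σ) (κ : Fin (n + 1) → σ) :
    wt x (Fin.cons c κ : Fin (n + 2) → σ) = (if c = κ 0 then 0 else x c) * wt x κ := by
  have : (∀ i j : Fin (n + 2), (i : ℕ) + 1 = j → (Fin.cons c κ : Fin (n + 2) → σ) i ≠
      (Fin.cons c κ : Fin (n + 2) → σ) j) ↔
      c ≠ κ 0 ∧ ∀ i j : Fin (n + 1), (i : ℕ) + 1 = j → κ i ≠ κ j := by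
    constructor
    · intro h
      refine ⟨h 0 1 rfl, fun i j hij => ?_⟩
      have := h i.succ j.succ (by simp [hij])
      simpa using this
    · rintro ⟨h1, h2⟩ i j hij
      cases j using Fin.cases with
      | zero => simp at hij
      | succ j =>
        cases i using Fin.cases with
        | zero =>
          have : j = 0 := by
            ext
            simp at hij
            simp [← hij]
          subst this
          simpa using h1
        | succ i =>
          simp only [Fin.cons_succ]
          exact h2 i j (by simpa using hij)
  simp only [wt, this, Fin.prod_univ_succ (n := n + 1), Fin.cons_zero, Fin.cons_succ]
  by_cases h : c = κ 0
  · simp [h]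
  · simp only [ne_eq, h, not_false_eq_true, true_and, if_false]
    ring

/-- Summing over the colour of the first vertex of a path applies the transfer operator. -/
theorem peel {n : ℕ} (f : σ → R) (Ψ : (Fin (n + 1) → σ) → R) :
    ∑ κ : Fin (n + 2) → σ, f (κ 0) * wt x κ * Ψ (Fin.tail κ) =
      ∑ κ : Fin (n + 1) → σ, tr x f (κ 0) * wt x κ * Ψ κ := by
  rw [← (Fin.consEquiv fun _ => σ).sum_comp, Fintype.sum_prod_type, sum_comm]
  refine sum_congr rfl fun κ _ => ?_
  have : tr x f (κ 0) = ∑ c, if c = κ 0 then 0 else x c * f c := by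
    rw [tr, br, ← sum_erase_add _ _ (mem_univ (κ 0)), add_sub_cancel_right,
      ← sum_erase_add univ _ (mem_univ (κ 0)), if_pos rfl, add_zero]
    refine sum_congr rfl fun c hc => ?_
    rw [if_neg (ne_of_mem_erase hc)]
  rw [this, sum_mul, sum_mul]
  refine sum_congr rfl fun c _ => ?_
  change f c * wt x (Fin.cons c κ : Fin (n + 2) → σ) * Ψ (Fin.tail (Fin.cons c κ : Fin (n + 2) → σ))
    = _
  rw [wt_cons, Fin.tail_cons]
  split_ifs <;> ring

/-- Summing over the colours of the first `a` vertices of a path applies `T^a`. -/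
theorem peel_iter (n a : ℕ) (f : σ → R) (Φ : (Fin (n + 1) → σ) → R) :
    ∑ κ : Fin (n + a + 1) → σ, f (κ 0) * wt x κ *
        Φ (fun i => κ ⟨(i : ℕ) + a, by omega⟩) =
      ∑ κ : Fin (n + 1) → σ, (tr x)^[a] f (κ 0) * wt x κ * Φ κ := by
  induction a generalizing f with
  | zero => rfl
  | succ a ih =>
    rw [Function.iterate_succ_apply, ← ih]
    exact peel (n := n + a) x f (fun κ => Φ (fun i => κ ⟨(i : ℕ) + a, by omega⟩))

theorem peel_all (a : ℕ) (f : σ → R) :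
    ∑ κ : Fin (a + 1) → σ, f (κ 0) * wt x κ = br x ((tr x)^[a] f) := by
  have h := peel_iter x 0 a f (fun _ => 1)
  simp only [mul_one] at h
  have h' : ∑ κ : Fin (a + 1) → σ, f (κ 0) * wt x κ =
      ∑ κ : Fin (0 + a + 1) → σ, f (κ 0) * wt x κ := by
    rw [zero_add]
  rw [h', h, br, ← (Equiv.funUnique (Fin 1) σ).symm.sum_comp]
  refine sum_congr rfl fun c _ => ?_
  simp [wt]
  ring

/-- The sum over the proper colourings of the path in which `v_{a+1}` and `v_{a+j+1}` both have
colour `c`. -/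
theorem sum_pinned (a b j : ℕ) (c : σ) :
    ∑ κ : Fin (b + j + a + 1) → σ, wt x κ *
      (dl c (κ ⟨a, by omega⟩) * dl c (κ ⟨j + a, by omega⟩)) =
    x c * ((tr x)^[j] (dl c) c * (hF x a c * hF x b c)) := by
  have h1 := peel_iter x (b + j) a (fun _ => 1)
    (fun κ => dl c (κ 0) * dl c (κ ⟨j, by omega⟩))
  simp only [one_mul, Fin.val_zero, zero_add] at h1
  rw [h1, tr_iter_one]
  have h2 := peel_iter x b j (hF x a c • dl c) (fun κ => dl c (κ 0))
  simp only [Fin.val_zero, zero_add] at h2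
  have h3 : ∀ κ : Fin (b + j + 1) → σ,
      hF x a (κ 0) * wt x κ * (dl c (κ 0) * dl c (κ ⟨j, by omega⟩)) =
      (hF x a c • dl c) (κ 0) * wt x κ * dl c (κ ⟨j, by omega⟩) := by
    intro κ
    by_cases h : κ 0 = c
    · simp [dl, h]
    · simp [dl, h]
  simp_rw [h3]
  rw [h2, tr_iter_smul]
  have h4 : ∀ κ : Fin (b + 1) → σ,
      (hF x a c • (tr x)^[j] (dl c)) (κ 0) * wt x κ * dl c (κ 0) =
      ((hF x a c * (tr x)^[j] (dl c) c) • (dl c : σ → R)) (κ 0) * wt x κ := by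
    intro κ
    by_cases h : κ 0 = c
    · simp [dl, h]
    · simp [dl, h]
  simp_rw [h4]
  rw [peel_all, tr_iter_smul]
  have h5 : ∀ k f g, br x ((tr x)^[k] f * g) = br x (f * (tr x)^[k] g) := by
    intro k
    induction k with
    | zero => intros; rfl
    | succ k ih =>
      intro f g
      rw [Function.iterate_succ_apply, ih, br_tr, Function.iterate_succ_apply']
  have h6 : br x ((tr x)^[b] (dl c)) = x c * hF x b c := by
    have := h5 b (dl c) (fun _ => 1)
    rw [tr_iter_one, br_dl] at this
    rw [← this]
    congr 1
    funext c'
    simp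
  have h7 : ∀ (s : R) f, br x (s • f) = s * br x f := by
    intro s f
    simp only [br, Pi.smul_apply, smul_eq_mul, mul_sum]
    exact sum_congr rfl fun _ _ => by ring
  rw [h7, h6]
  ring

/-- The chromatic polynomial of the hat in the variables `x_c`, by deletion of the chord. -/
theorem sum_hat (a b j n : ℕ) (hn : n = b + j + a + 1) :
    ∑ κ : Fin n → σ, (∏ i, x (κ i)) *
      (if (∀ i j : Fin n, (i : ℕ) + 1 = j → κ i ≠ κ j) ∧
        (∀ i i' : Fin n, (i : ℕ) = a → (i' : ℕ) = a + j → κ i ≠ κ i') then 1 else 0) =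
    Pc (eF x) (b + 1 + (a + j)) - ∑ i ∈ range (a + 1), Pc (eF x) (a - i) * GF x b (j + i) +
      ∑ p ∈ range j, ((j - p : ℕ) : R) * Pc (eF x) p *
        ∑ i ∈ range (a + 1), Pc (eF x) (a - i) * GF x b (j - p + i) := by
  subst hn
  have h1 : ∀ κ : Fin (b + j + a + 1) → σ, (∏ i, x (κ i)) *
      (if (∀ i j : Fin (b + j + a + 1), (i : ℕ) + 1 = j → κ i ≠ κ j) ∧
        (∀ i i' : Fin (b + j + a + 1), (i : ℕ) = a → (i' : ℕ) = a + j → κ i ≠ κ i')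
        then 1 else 0) =
      1 * wt x κ - ∑ c, wt x κ * (dl c (κ ⟨a, by omega⟩) * dl c (κ ⟨j + a, by omega⟩)) := by
    intro κ
    have h2 : (∀ i i' : Fin (b + j + a + 1), (i : ℕ) = a → (i' : ℕ) = a + j → κ i ≠ κ i') ↔
        κ ⟨a, by omega⟩ ≠ κ ⟨j + a, by omega⟩ := by
      constructor
      · intro h
        exact h _ _ rfl (add_comm _ _)
      · rintro h ⟨i, hi⟩ ⟨i', hi'⟩ h1 h2
        simp only at h1 h2
        subst h1
        rw [add_comm] at h2
        subst h2
        exact h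
    have h3 : ∑ c, (dl c (κ ⟨a, by omega⟩) * dl c (κ ⟨j + a, by omega⟩) : R) =
        if κ ⟨a, by omega⟩ = κ ⟨j + a, by omega⟩ then 1 else 0 := by
      simp [dl]
    rw [← mul_sum, h3, wt]
    simp only [h2]
    by_cases h : κ ⟨a, by omega⟩ = κ ⟨j + a, by omega⟩
    · simp [h]
    · simp [h]
  simp_rw [h1]
  rw [sum_sub_distrib, sum_comm]
  have hA := peel_all x (b + j + a) (fun _ => 1)
  rw [hA, tr_iter_one, ← Pc_eq_br]
  simp_rw [sum_pinned, tr_iter_dl]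
  have h4 := br_pow x a b
  rw [show b + 1 + (a + j) = b + j + a + 1 by ring, ← h4, sub_add]
  congr 1
  simp_rw [← h4, br, mul_sum]
  rw [sum_comm, ← sum_sub_distrib]
  refine sum_congr rfl fun c _ => ?_
  rw [sub_mul, mul_sub, sum_mul, mul_sum]
  congr 1
  refine sum_congr rfl fun p _ => ?_
  ring

end Colors

/-! ### Passage to infinitely many colours -/

section Truncation

theorem prod_X {ι : Type*} (s : Finset ι) (f : ι → ℕ) :
    (∏ i ∈ s, (MvPowerSeries.X (f i) : SymF)) =
      MvPowerSeries.monomial (∑ i ∈ s, Finsupp.single (f i) 1) 1 := by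
  classical
  induction s using Finset.induction_on with
  | empty => simp
  | insert i s hi ih =>
    rw [prod_insert hi, sum_insert hi, ih, MvPowerSeries.X, MvPowerSeries.monomial_mul_monomial,
      one_mul]

/-- For the coefficient of the monomial `d`, only the colourings by colours in the support of `d`
matter. -/
theorem csf_coeff {n : ℕ} (G : SimpleGraph (Fin n)) (d : ℕ →₀ ℕ)
    [DecidablePred fun κ : Fin n → d.support => ∀ v w, G.Adj v w → κ v ≠ κ w] :
    MvPowerSeries.coeff d (csf G) = MvPowerSeries.coeff d
      (∑ κ : Fin n → d.support, (∏ i, (MvPowerSeries.X (κ i : ℕ) : SymF)) *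
        if ∀ v w, G.Adj v w → κ v ≠ κ w then 1 else 0) := by
  classical
  have h1 : ∀ κ : Fin n → d.support, MvPowerSeries.coeff d
      ((∏ i, (MvPowerSeries.X (κ i : ℕ) : SymF)) *
        if ∀ v w, G.Adj v w → κ v ≠ κ w then 1 else 0) =
      if (∀ v w, G.Adj v w → κ v ≠ κ w) ∧ ∀ i : ℕ, {v | (κ v : ℕ) = i}.ncard = d i
        then 1 else 0 := by
    intro κ
    have h2 : d = ∑ i, Finsupp.single (κ i : ℕ) 1 ↔
        ∀ i : ℕ, {v | (κ v : ℕ) = i}.ncard = d i := by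
      rw [DFunLike.ext_iff]
      refine forall_congr' fun i => ?_
      rw [Finsupp.finsetSum_apply, Set.ncard_eq_toFinset_card']
      simp only [Finsupp.single_apply, sum_boole, Nat.cast_id, Set.toFinset_ofPred]
      exact eq_comm
    by_cases h : ∀ v w, G.Adj v w → κ v ≠ κ w
    · rw [if_pos h, mul_one, prod_X, MvPowerSeries.coeff_monomial]
      simp only [h2, and_iff_right h]
    · rw [if_neg h, if_neg (fun h' => h h'.1), mul_zero, map_zero]
  rw [map_sum, sum_congr rfl fun κ _ => h1 κ, sum_boole]
  change (({κ : Fin n → ℕ | (∀ v w, G.Adj v w → κ v ≠ κ w) ∧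
        ∀ i : ℕ, {v | κ v = i}.ncard = d i}).ncard : ℚ) = _
  rw [← Set.ncard_coe_finset, ← Set.ncard_image_of_injective _
    (show Function.Injective (fun (κ : Fin n → d.support) v => (κ v : ℕ)) from
      fun κ κ' h => funext fun v => Subtype.ext (congrFun h v))]
  congr 2
  ext κ
  simp only [Set.mem_ofPred_eq, Set.mem_image, coe_filter, mem_univ, true_and]
  constructor
  · rintro ⟨h1, h2⟩
    have hs : ∀ v, κ v ∈ d.support := by
      intro v
      rw [Finsupp.mem_support_iff, ← h2]
      exact Set.ncard_ne_zero_of_mem (a := v) rfl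
    refine ⟨fun v => ⟨κ v, hs v⟩, ⟨fun v w h h' => h1 v w h (congrArg Subtype.val h'), h2⟩, rfl⟩
  · rintro ⟨κ', ⟨h1, h2⟩, rfl⟩
    exact ⟨fun v w h h' => h1 v w h (Subtype.ext h'), h2⟩

/-- Two power series agree on all the monomials in the variables indexed by `C`. -/
def Cong (C : Finset ℕ) (f g : SymF) : Prop :=
  ∀ d : ℕ →₀ ℕ, d.support ⊆ C → MvPowerSeries.coeff d f = MvPowerSeries.coeff d g

theorem Cong.mul {C : Finset ℕ} {f f' g g' : SymF} (hf : Cong C f f') (hg : Cong C g g') :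
    Cong C (f * g) (f' * g') := by
  classical
  intro d hd
  rw [MvPowerSeries.coeff_mul, MvPowerSeries.coeff_mul]
  refine sum_congr rfl fun p hp => ?_
  rw [HasAntidiagonal.mem_antidiagonal] at hp
  rw [hf p.1, hg p.2]
  · refine subset_trans (Finsupp.support_mono ?_) hd
    rw [← hp]
    exact le_add_self
  · refine subset_trans (Finsupp.support_mono ?_) hd
    rw [← hp]
    exact le_self_add

theorem esymm_cong (C : Finset ℕ) (k : ℕ) :
    Cong C (esymm k) (eF (fun c : C => (MvPowerSeries.X (c : ℕ) : SymF)) k) := by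
  classical
  intro d hd
  rw [eF, map_sum]
  simp_rw [prod_X, MvPowerSeries.coeff_monomial]
  change (if (d.sum fun _ e => e) = k ∧ ∀ i, d i ≤ 1 then (1 : ℚ) else 0) = _
  have happ : ∀ (s : Finset C) (c : ℕ), (∑ i ∈ s, Finsupp.single (i : ℕ) 1) c =
      if ∃ h : c ∈ C, (⟨c, h⟩ : C) ∈ s then 1 else 0 := by
    intro s c
    rw [Finsupp.finsetSum_apply]
    simp only [Finsupp.single_apply]
    split_ifs with h
    · obtain ⟨hc, hs⟩ := h
      rw [sum_eq_single_of_mem _ hs]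
      · simp
      · intro i _ hi
        rw [if_neg]
        rintro rfl
        exact hi rfl
    · refine sum_eq_zero fun i hi => ?_
      rw [if_neg]
      rintro rfl
      exact h ⟨i.2, hi⟩
  have hsum : ∀ s : Finset C, ((∑ i ∈ s, Finsupp.single (i : ℕ) 1).sum fun _ e => e) = #s := by
    intro s
    rw [← Finsupp.sum_finsetSum_index (fun _ => rfl) (fun _ _ _ => rfl)]
    simp
  split_ifs with h
  · rw [sum_eq_single_of_mem (univ.filter fun c : C => d c = 1)]
    · rw [if_pos]
      ext c
      rw [happ]
      split_ifs with h'
      · obtain ⟨_, h'⟩ := h'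
        simpa using h'
      · by_contra h0
        have h1 : d c = 1 := by have := h.2 c; omega
        exact h' ⟨hd (by simp [h1]), by simpa using h1⟩
    · rw [mem_powersetCard]
      refine ⟨subset_univ _, ?_⟩
      rw [← hsum, ← h.1]
      congr 1
      ext c
      rw [happ]
      split_ifs with h'
      · obtain ⟨_, h'⟩ := h'
        exact (mem_filter.1 h').2.symm
      · by_contra h0
        have h1 : d c = 1 := by have := h.2 c; omega
        exact h' ⟨hd (by simp [h1]), by simpa using h1⟩
    · intro s hs hne
      rw [if_neg]
      intro hds
      apply hne
      ext c
      rw [mem_filter, hds, happ]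
      simp
  · symm
    refine sum_eq_zero fun s hs => ?_
    rw [if_neg]
    rintro rfl
    apply h
    rw [hsum]
    refine ⟨(mem_powersetCard.1 hs).2, fun i => ?_⟩
    rw [happ]
    split_ifs <;> simp

theorem esymmProd_cong (C : Finset ℕ) (I : List ℕ) :
    Cong C (esymmProd I) (eL (eF fun c : C => (MvPowerSeries.X (c : ℕ) : SymF)) I) := by
  induction I with
  | nil => intro d _; rfl
  | cons k I ih =>
    have : esymmProd (k :: I) = esymm k * esymmProd I := by simp [esymmProd]
    rw [this, eL_cons]
    exact (esymm_cong C k).mul ih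

end Truncation

/-! ### The hat -/

theorem eL_esymm (I : List ℕ) : esymmProd I = eL esymm I := rfl

/-- The hat has the edges of the path and the chord. -/
theorem hat_proper {σ : Type*} (a b j : ℕ) (hj : 1 ≤ j) (κ : Fin (a + (j + 1) + b) → σ) :
    (∀ v w, (hatG a (j + 1) b).Adj v w → κ v ≠ κ w) ↔
      (∀ v w : Fin (a + (j + 1) + b), (v : ℕ) + 1 = w → κ v ≠ κ w) ∧
      (∀ v w : Fin (a + (j + 1) + b), (v : ℕ) = a → (w : ℕ) = a + j → κ v ≠ κ w) := by
  simp only [hatG, SimpleGraph.fromRel_adj]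
  constructor
  · intro h
    refine ⟨fun v w hvw => h v w ⟨?_, Or.inl (Or.inl hvw)⟩,
      fun v w h1 h2 => h v w ⟨?_, Or.inl (Or.inr ⟨h1, by omega⟩)⟩⟩
    · rintro rfl; omega
    · rintro rfl; omega
  · rintro ⟨h1, h2⟩ v w ⟨-, (h | ⟨h, h'⟩) | (h | ⟨h, h'⟩)⟩
    · exact h1 v w h
    · exact h2 v w h (by omega)
    · exact (h1 w v h).symm
    · exact (h2 w v h (by omega)).symm

/-- The formula for the hat, with the sums over compositions as sums over lists. -/
theorem csf_hat (a b j : ℕ) (hj : 1 ≤ j) : csf (hatG a (j + 1) b) =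
    ∑ K ∈ comps (b + 1 + (a + j)), coefQ b (j + 1) K • esymmProd K + sumS esymm a b j := by
  classical
  ext d
  let x : d.support → SymF := fun c => MvPowerSeries.X (c : ℕ)
  have h1 : MvPowerSeries.coeff d (csf (hatG a (j + 1) b)) = MvPowerSeries.coeff d
      (∑ K ∈ comps (b + 1 + (a + j)), coefQ b (j + 1) K • eL (eF x) K + sumS (eF x) a b j) := by
    rw [rhs_eq (eF x) a b j hj, ← main_algebra (eF x) (eF_zero x) b (GF x b) (Pc_GF x b) a j,
      ← sum_hat x a b j (a + (j + 1) + b) (by ring), csf_coeff]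
    simp only [hat_proper a b j hj]
    rfl
  rw [h1]
  have hc : ∀ I, MvPowerSeries.coeff d (esymmProd I) = MvPowerSeries.coeff d (eL (eF x) I) :=
    fun I => esymmProd_cong d.support I d (subset_refl _)
  simp only [sumS, map_add, map_sum, map_smul, apply_ite (MvPowerSeries.coeff d), map_zero, hc,
    ← eL_esymm]

theorem sumS_composition (a b j : ℕ) : sumS esymm a b j =
    ∑ p ∈ range (a + (j + 1) + b + 1),
      ∑ I : Composition p, ∑ J : Composition (a + (j + 1) + b - p),
        open Classical in
        if Smem a (j + 1) b I.blocks J.blocks then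
          ((((j + 1 : ℕ) : ℚ) - 1 - (p : ℚ)) * ((wC I.blocks * wC J.blocks : ℕ) : ℚ)) •
            esymmProd (I.blocks ++ J.blocks)
        else 0 := by
  classical
  rw [sumS]
  refine sum_congr rfl fun p _ => ?_
  rw [← sum_composition]
  refine sum_congr rfl fun I _ => ?_
  rw [← sum_composition (a + (j + 1) + b - p)]
  rfl

theorem denom_pos (a b j : ℕ) (K : List ℕ) (hK : K ∈ comps (b + 1 + (a + j)))
    (hN : NK b (j + 1) K ≤ -1) :
    0 < thetaPlus K (b + (j + 1)) + thetaMinus K (b + (j + 1) - 1) := by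
  rw [mem_comps] at hK
  -- Only the part `k` at the position `b + m` matters: the sum of the two distances is `k - 1`.
  obtain ⟨J, k, L, rfl, hJ, hk⟩ := exists_cross (b + j) K hK.1 (by omega)
  rw [NK, thetaPlus, thetaPlus, sigmaPlus_cross J k L (b + (j + 1)) (by omega) (by omega)] at hN
  rw [thetaPlus, thetaMinus, sigmaPlus_cross _ _ _ _ (by omega) (by omega),
    sigmaMinus_cross _ _ _ _ (by omega) (by omega)]
  omega

open Classical in
/-- For `n = a + m + b` with `m ≥ 2` and `a, b ≥ 0`,
`X_{H_{a,m,b}} = Σ_{K ⊨ n, N_K ≤ -1} (-N_K) w_K e_K / (Θ_K^+(b+m) + Θ_K^-(b+m-1))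
 + Σ_{K ⊨ n, N_K ≥ 1} N_K w_K e_K + Σ_{(I,J) ∈ S_{a,m,b}} (m - 1 - |I|) w_I w_J e_{IJ}`;
moreover when `N_K ≤ -1` the denominator `Θ_K^+(b+m) + Θ_K^-(b+m-1)` is positive. -/
theorem stmt_16 (a m b : ℕ) (hm : 2 ≤ m) :
    (csf (hatG a m b) =
      (∑ K : Composition (a + m + b),
        if NK b m K.blocks ≤ -1 then
          (((-(NK b m K.blocks) : ℚ) * (wC K.blocks : ℚ)) /
              ((thetaPlus K.blocks (b + m) + thetaMinus K.blocks (b + m - 1) : ℕ) : ℚ)) •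
            esymmProd K.blocks
        else 0) +
      (∑ K : Composition (a + m + b),
        if 1 ≤ NK b m K.blocks then
          (((NK b m K.blocks) : ℚ) * (wC K.blocks : ℚ)) • esymmProd K.blocks
        else 0) +
      (∑ p ∈ Finset.range (a + m + b + 1),
        ∑ I : Composition p, ∑ J : Composition (a + m + b - p),
          if Smem a m b I.blocks J.blocks then
            (((m : ℚ) - 1 - (p : ℚ)) * ((wC I.blocks * wC J.blocks : ℕ) : ℚ)) •
              esymmProd (I.blocks ++ J.blocks)
          else 0)) ∧
    (∀ K : Composition (a + m + b), NK b m K.blocks ≤ -1 →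
      0 < thetaPlus K.blocks (b + m) + thetaMinus K.blocks (b + m - 1)) := by
  obtain ⟨j, rfl⟩ : ∃ j, m = j + 1 := ⟨m - 1, by omega⟩
  have hn : a + (j + 1) + b = b + 1 + (a + j) := by ring
  constructor
  · rw [csf_hat a b j (by omega), sumS_composition, ← hn, ← sum_composition,
      ← sum_add_distrib]
    congr 1
    refine sum_congr rfl fun K _ => ?_
    rw [coefQ, add_smul]
    congr 1
    · split_ifs
      · rfl
      · exact zero_smul _ _
    · split_ifs
      · rfl
      · exact zero_smul _ _
  · intro K hK
    refine denom_pos a b j K.blocks ?_ hK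
    rw [mem_comps, ← hn]
    exact ⟨fun i hi => K.blocks_pos hi, K.blocks_sum⟩
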